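/- Let F be an iterated function system on ℝ^d with uniform contraction ratio λ and uniform rotation, with Garsia entropy h_F and splitting rate M_F, and suppose 1 < M_F < ∞. If (d·log M_F − h_F)·(log M_F)² < (1/27)·(log M_F − log λ⁻¹)³·λ⁴, then the self-similar measure μ_F is absolutely continuous with respect to Lebesgue measure on ℝ^d. -/

import Mathlib

open MeasureTheory Real

/-- An iterated function system on `ℝ^d` with uniform contraction ratio and uniform rotation:
maps `S_i (x) = λ U x + a_i` with weights `p_i > 0`. -/
structure UIFS (d : ℕ) where
  m : ℕ
  hm : 0 < m
  lam : ℝ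
  hlam : lam ∈ Set.Ioo (0 : ℝ) 1
  U : EuclideanSpace ℝ (Fin d) ≃ₗᵢ[ℝ] EuclideanSpace ℝ (Fin d)
  a : Fin m → EuclideanSpace ℝ (Fin d)
  p : Fin m → ℝ
  hp : ∀ i, 0 < p i
  hsum : ∑ i, p i = 1

namespace UIFS

variable {d : ℕ} (F : UIFS d)

/-- The map `S_i : x ↦ λ U x + a_i`. -/
noncomputable def S (i : Fin F.m) (x : EuclideanSpace ℝ (Fin d)) : EuclideanSpace ℝ (Fin d) :=
  F.lam • F.U x + F.a i

/-- `S_{j 0} ∘ ⋯ ∘ S_{j (k-1)} (0) = ∑_t λ^t U^t a_{j t}`. -/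
noncomputable def pt {k : ℕ} (j : Fin k → Fin F.m) : EuclideanSpace ℝ (Fin d) :=
  ∑ t : Fin k, F.lam ^ (t : ℕ) • (F.U ^ (t : ℕ)) (F.a (j t))

/-- The `k`-step support `V_{F,k}`. -/
noncomputable def V (k : ℕ) : Set (EuclideanSpace ℝ (Fin d)) :=
  Set.range (fun j : Fin k → Fin F.m => F.pt j)

/-- The separation `Δ_{F,k}` of `F` after `k` steps. -/
noncomputable def sep (k : ℕ) : ℝ :=
  sInf {e : ℝ | ∃ x ∈ F.V k, ∃ y ∈ F.V k, x ≠ y ∧ e = dist x y}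

/-- The splitting rate `M_F = limsup_k Δ_{F,k}^{-1/k}` (as an extended real). -/
noncomputable def splittingRate : ENNReal :=
  Filter.limsup (fun k : ℕ => ENNReal.ofReal (F.sep k) ^ (-(1 : ℝ) / k)) Filter.atTop

/-- The probability that the `k`-step random point equals `x`. -/
noncomputable def weight (k : ℕ) (x : EuclideanSpace ℝ (Fin d)) : ℝ :=
  letI := Classical.decEq (EuclideanSpace ℝ (Fin d))
  ∑ j : Fin k → Fin F.m, if F.pt j = x then ∏ t, F.p (j t) else 0

/-- The Shannon entropy `h_{F,k} = H(∑_{t<k} λ^t U^t X_t)`. -/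
noncomputable def Hk (k : ℕ) : ℝ :=
  letI := Classical.decEq (EuclideanSpace ℝ (Fin d))
  ∑ x ∈ Finset.image (fun j : Fin k → Fin F.m => F.pt j) Finset.univ,
    Real.negMulLog (F.weight k x)

/-- The Garsia entropy `h_F = liminf_k h_{F,k}/k`. -/
noncomputable def garsiaEntropy : ℝ :=
  Filter.liminf (fun k : ℕ => F.Hk k / k) Filter.atTop

end UIFS

open Filter
open scoped BoundedContinuousFunction Topology

/-!
Let `T` be convolution with `μ_F` on bounded continuous functions and `P v` the heat semigroup.
If a `k`-step law has entropy at least `h k` and its atoms are `exp (-L k)`-separated, then the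
differential entropy of its Gaussian smoothings grows by at most about `(d L - h) k` between the
variances `exp (-2 L k)` and `1`. By pigeonhole it grows slowly at some intermediate scale, and a
Pinsker type inequality shows that there the smoothed law is almost invariant in `L¹` under small
translations. A symmetric average only sees second differences, so two such blocks of digits give
`‖B * P (2 v) * (P w - 1)‖ ≤ A w / v`, where `B` is convolution with the law of the two blocks.

Self-similarity splits `μ_F` into consecutive blocks, whence
`‖T * (P (2 v) * (P w - 1)) ^ m‖ ≤ (A w / v) ^ m` for all `v ≤ exp (-2 τ R ^ m)`. Expanding
`P Y - P (2 Y)` into `m`-th powers of `P w - 1` makes the increments of `T * P Y` along dyadic `Y`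
summable as soon as `2 e A R < 1`, which is what the hypothesis on `F` provides. Hence `T * P Y` is
Cauchy in operator norm, and `μ_F` is a limit in total variation of absolutely continuous measures.
-/

/-! ### Averaging operators -/

section BCFOperators

variable {E : Type*} [NormedAddCommGroup E]

/-- The Banach algebra of bounded linear operators on the bounded continuous functions on `E`. -/
abbrev BCFOperator (E : Type*) [NormedAddCommGroup E] : Type _ := (E →ᵇ ℝ) →L[ℝ] (E →ᵇ ℝ)

/-- Makes every ring operation go through one instance: the generic instances on continuous linear
maps lead to a subtraction that unification does not identify with the one of the ring. -/
noncomputable instance : NormedRing (BCFOperator E) := ContinuousLinearMap.toNormedRing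

namespace BCFOperator

variable {A B : BCFOperator E}

lemma ext_apply (h : ∀ φ x, A φ x = B φ x) : A = B :=
  ContinuousLinearMap.ext fun φ => BoundedContinuousFunction.ext (h φ)

lemma norm_le_of_forall_apply_le {C : ℝ} (hC : 0 ≤ C) (h : ∀ φ x, ‖A φ x‖ ≤ C * ‖φ‖) :
    ‖A‖ ≤ C :=
  ContinuousLinearMap.opNorm_le_bound _ hC fun φ =>
    (BoundedContinuousFunction.norm_le (by positivity)).2 (h φ)

lemma norm_apply_le (A : BCFOperator E) (φ : E →ᵇ ℝ) (x : E) : ‖A φ x‖ ≤ ‖A‖ * ‖φ‖ :=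
  ((A φ).norm_coe_le_norm x).trans (A.le_opNorm φ)

end BCFOperator

section Pullback

variable [NormedSpace ℝ E]

/-- The operator `φ ↦ φ ∘ L`. -/
noncomputable def pullbackOp (L : E ≃L[ℝ] E) : BCFOperator E :=
  BoundedContinuousFunction.compContinuousCLM ℝ ℝ ⟨L, L.continuous⟩

/-- The conjugate of an operator by the pullback along `L`. -/
noncomputable def conjOp (L : E ≃L[ℝ] E) (A : BCFOperator E) : BCFOperator E :=
  pullbackOp L.symm * A * pullbackOp L

lemma pullbackOp_apply (L : E ≃L[ℝ] E) (φ : E →ᵇ ℝ) (x : E) : pullbackOp L φ x = φ (L x) := rfl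

lemma pullbackOp_symm_mul (L : E ≃L[ℝ] E) : pullbackOp L.symm * pullbackOp L = 1 :=
  BCFOperator.ext_apply fun φ x => congrArg φ (L.apply_symm_apply x)

lemma pullbackOp_mul_symm (L : E ≃L[ℝ] E) : pullbackOp L * pullbackOp L.symm = 1 :=
  pullbackOp_symm_mul L.symm

lemma conjOp_mul (L : E ≃L[ℝ] E) (A B : BCFOperator E) :
    conjOp L (A * B) = conjOp L A * conjOp L B := by
  calc conjOp L (A * B) = pullbackOp L.symm * A * 1 * B * pullbackOp L := by
        simp only [conjOp, mul_assoc, mul_one]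
    _ = conjOp L A * conjOp L B := by
        rw [← pullbackOp_mul_symm L]
        simp only [conjOp, mul_assoc]

lemma conjOp_sub_one (L : E ≃L[ℝ] E) (A : BCFOperator E) :
    conjOp L (A - 1) = conjOp L A - 1 := by
  rw [conjOp, mul_sub, sub_mul, mul_one, pullbackOp_symm_mul, conjOp]

lemma conjOp_pow (L : E ≃L[ℝ] E) (A : BCFOperator E) (n : ℕ) :
    conjOp L (A ^ n) = conjOp L A ^ n := by
  induction n with
  | zero => rw [pow_zero, pow_zero, conjOp, mul_one, pullbackOp_symm_mul]
  | succ n ih => rw [pow_succ, conjOp_mul, ih, pow_succ]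

lemma norm_conjOp_le (L : E ≃L[ℝ] E) (A : BCFOperator E) : ‖conjOp L A‖ ≤ ‖A‖ := by
  have norm_pullbackOp_le (L : E ≃L[ℝ] E) : ‖pullbackOp L‖ ≤ 1 :=
    BoundedContinuousFunction.norm_compContinuousCLM_le_one _
  calc ‖conjOp L A‖ ≤ ‖pullbackOp L.symm‖ * ‖A‖ * ‖pullbackOp L‖ := norm_mul₃_le
    _ ≤ 1 * ‖A‖ * 1 := by gcongr <;> exact norm_pullbackOp_le _
    _ = ‖A‖ := by ring

end Pullback

section Convolution

variable [MeasurableSpace E]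

lemma norm_integral_bcf_comp_add_left_le (ρ : Measure E) [IsFiniteMeasure ρ] (φ : E →ᵇ ℝ)
    (x : E) : ‖∫ u, φ (x + u) ∂ρ‖ ≤ ρ.real Set.univ * ‖φ‖ := by
  rw [mul_comm]
  exact norm_integral_le_of_norm_le_const (.of_forall fun _ => φ.norm_coe_le_norm _)

variable [BorelSpace E]

lemma integrable_bcf_comp_add_left (ρ : Measure E) [IsFiniteMeasure ρ] (φ : E →ᵇ ℝ) (x : E) :
    Integrable (fun u => φ (x + u)) ρ :=
  .of_bound (by fun_prop : Continuous fun u => φ (x + u)).aestronglyMeasurable ‖φ‖ <|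
    .of_forall fun _ => φ.norm_coe_le_norm _

lemma continuous_integral_bcf_comp_add_left (ρ : Measure E) [IsFiniteMeasure ρ] (φ : E →ᵇ ℝ) :
    Continuous fun x => ∫ u, φ (x + u) ∂ρ :=
  continuous_of_dominated (fun x => (integrable_bcf_comp_add_left ρ φ x).aestronglyMeasurable)
    (fun _ => .of_forall fun _ => φ.norm_coe_le_norm _) (integrable_const ‖φ‖)
    (.of_forall fun _ => by fun_prop)

/-- The averaging operator `φ ↦ (x ↦ ∫ φ (x + u) dρ(u))` of a finite measure `ρ`, that is,
convolution with the reflection of `ρ`. -/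
noncomputable def convOp (ρ : Measure E) [IsFiniteMeasure ρ] : BCFOperator E :=
  LinearMap.mkContinuous
    { toFun := fun φ => BoundedContinuousFunction.ofNormedAddCommGroup _
        (continuous_integral_bcf_comp_add_left ρ φ) _ (norm_integral_bcf_comp_add_left_le ρ φ)
      map_add' := fun φ ψ => BoundedContinuousFunction.ext fun x =>
        integral_add (integrable_bcf_comp_add_left ρ φ x) (integrable_bcf_comp_add_left ρ ψ x)
      map_smul' := fun c _ => BoundedContinuousFunction.ext fun _ => integral_const_mul c _ }
    (ρ.real Set.univ) fun φ =>
      (BoundedContinuousFunction.norm_le (by positivity)).2 (norm_integral_bcf_comp_add_left_le ρ φ)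

lemma convOp_apply (ρ : Measure E) [IsFiniteMeasure ρ] (φ : E →ᵇ ℝ) (x : E) :
    convOp ρ φ x = ∫ u, φ (x + u) ∂ρ := rfl

lemma norm_convOp_le_one (ρ : Measure E) [IsProbabilityMeasure ρ] : ‖convOp ρ‖ ≤ 1 :=
  (LinearMap.mkContinuous_norm_le _ measureReal_nonneg _).trans_eq probReal_univ

lemma convOp_dirac_apply (z : E) (φ : E →ᵇ ℝ) (x : E) :
    convOp (Measure.dirac z) φ x = φ (x + z) :=
  integral_dirac _ _

lemma convOp_dirac_zero : convOp (Measure.dirac (0 : E)) = 1 :=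
  BCFOperator.ext_apply fun φ x => by
    rw [convOp_dirac_apply, add_zero, one_apply_eq_self]

lemma convOp_map [NormedSpace ℝ E] (L : E ≃L[ℝ] E) (ρ : Measure E) [IsFiniteMeasure ρ] :
    convOp (ρ.map L) = conjOp L (convOp ρ) := by
  refine BCFOperator.ext_apply fun φ x => ?_
  rw [convOp_apply, integral_map L.continuous.measurable.aemeasurable
    (integrable_bcf_comp_add_left _ φ x).aestronglyMeasurable]
  simp [conjOp, pullbackOp_apply, convOp_apply]

lemma convOp_sub_one_apply_of_isNegInvariant (γ : Measure E) [IsProbabilityMeasure γ]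
    [γ.IsNegInvariant] (ψ : E →ᵇ ℝ) (x : E) :
    (convOp γ - 1) ψ x = ∫ z, (ψ (x + z) + ψ (x + -z) - 2 * ψ x) / 2 ∂γ := by
  have h := integrable_bcf_comp_add_left γ ψ x
  have h_neg : Integrable (fun z => ψ (x + -z)) γ := h.comp_neg
  have h_eq : ∫ z, ψ (x + -z) ∂γ = ∫ z, ψ (x + z) ∂γ :=
    integral_neg_eq_self (fun z => ψ (x + z)) γ
  have h_sum : Integrable (fun z => ψ (x + z) + ψ (x + -z)) γ := h.add h_neg
  rw [integral_div, integral_sub h_sum (integrable_const _), integral_add h h_neg, h_eq,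
    integral_const, probReal_univ, one_smul, ← convOp_apply]
  change convOp γ ψ x - ψ x = _
  ring

variable [SecondCountableTopology E]

lemma convOp_conv (ρ ρ' : Measure E) [IsFiniteMeasure ρ] [IsFiniteMeasure ρ'] :
    convOp (ρ.conv ρ') = convOp ρ * convOp ρ' := by
  refine BCFOperator.ext_apply fun φ x => ?_
  rw [mul_apply_eq_comp, convOp_apply,
    integral_conv (integrable_bcf_comp_add_left _ φ x)]
  simp only [convOp_apply, add_assoc]

lemma commute_convOp (ρ ρ' : Measure E) [IsFiniteMeasure ρ] [IsFiniteMeasure ρ'] :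
    Commute (convOp ρ) (convOp ρ') := by
  simp only [Commute, SemiconjBy, ← convOp_conv, Measure.conv_comm ρ ρ']

lemma norm_secondDifference_convOp_mul_le (ρ₁ ρ₂ : Measure E) [IsProbabilityMeasure ρ₁]
    [IsProbabilityMeasure ρ₂] (φ : E →ᵇ ℝ) (x z : E) :
    ‖(convOp ρ₁ * convOp ρ₂) φ (x + z) + (convOp ρ₁ * convOp ρ₂) φ (x + -z)
        - 2 * (convOp ρ₁ * convOp ρ₂) φ x‖ ≤
      ‖convOp ρ₁ * (convOp (Measure.dirac z) - 1)‖ *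
        ‖convOp ρ₂ * (convOp (Measure.dirac z) - 1)‖ * ‖φ‖ := by
  set A := convOp ρ₁
  set B := convOp ρ₂
  set T := convOp (Measure.dirac z)
  set T' := convOp (Measure.dirac (-z))
  have hcomm : T' * (A * (T - 1) * (B * (T - 1))) = T' * ((T - 1) * (T - 1)) * (A * B) := by
    have hA : Commute A (T - 1) := (commute_convOp _ _).sub_right (Commute.one_right _)
    have hB : Commute B (T - 1) := (commute_convOp _ _).sub_right (Commute.one_right _)
    rw [mul_assoc A, ← mul_assoc (T - 1), ← hB.eq, mul_assoc B, ← mul_assoc A,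
      ((hA.mul_left hB).mul_right (hA.mul_left hB)).eq, ← mul_assoc]
  have happly : (A * B) φ (x + z) + (A * B) φ (x + -z) - 2 * (A * B) φ x =
      (T' * (A * (T - 1) * (B * (T - 1)))) φ x := by
    rw [hcomm]
    generalize hψ : (A * B) φ = ψ
    have hT (χ : E →ᵇ ℝ) (y : E) : (T - 1) χ y = χ (y + z) - χ y :=
      congrArg (· - χ y) (convOp_dirac_apply z χ y)
    rw [mul_apply_eq_comp, hψ, mul_apply_eq_comp,
      mul_apply_eq_comp, convOp_dirac_apply, hT, hT, hT, neg_add_cancel_right]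
    ring
  rw [happly]
  refine (BCFOperator.norm_apply_le _ _ _).trans ?_
  gcongr
  calc ‖T' * (A * (T - 1) * (B * (T - 1)))‖ ≤ ‖T'‖ * (‖A * (T - 1)‖ * ‖B * (T - 1)‖) :=
        (norm_mul_le _ _).trans (mul_le_mul_of_nonneg_left (norm_mul_le _ _) (norm_nonneg _))
    _ ≤ ‖A * (T - 1)‖ * ‖B * (T - 1)‖ :=
        mul_le_of_le_one_left (by positivity) (norm_convOp_le_one _)

/-- A symmetric average only sees second differences, and each of the two factors absorbs one
difference; hence the bound is quadratic in the moduli `n₁`, `n₂`. -/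
lemma norm_convOp_mul_convOp_mul_sub_one_le (ρ₁ ρ₂ γ : Measure E) [IsProbabilityMeasure ρ₁]
    [IsProbabilityMeasure ρ₂] [IsProbabilityMeasure γ] [γ.IsNegInvariant] {n₁ n₂ : E → ℝ}
    (h₁ : ∀ z, ‖convOp ρ₁ * (convOp (Measure.dirac z) - 1)‖ ≤ n₁ z)
    (h₂ : ∀ z, ‖convOp ρ₂ * (convOp (Measure.dirac z) - 1)‖ ≤ n₂ z)
    (hi₁ : Integrable (fun z => n₁ z ^ 2) γ) (hi₂ : Integrable (fun z => n₂ z ^ 2) γ) :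
    ‖convOp ρ₁ * convOp ρ₂ * (convOp γ - 1)‖ ≤ (∫ z, n₁ z ^ 2 ∂γ + ∫ z, n₂ z ^ 2 ∂γ) / 4 := by
  refine BCFOperator.norm_le_of_forall_apply_le (by positivity) fun φ x => ?_
  have hcomm : Commute (convOp ρ₁ * convOp ρ₂) (convOp γ - 1) :=
    ((commute_convOp _ _).mul_left (commute_convOp _ _)).sub_right (Commute.one_right _)
  have hpoint (z : E) : ‖((convOp ρ₁ * convOp ρ₂) φ (x + z) + (convOp ρ₁ * convOp ρ₂) φ (x + -z)
      - 2 * (convOp ρ₁ * convOp ρ₂) φ x) / 2‖ ≤ (n₁ z ^ 2 + n₂ z ^ 2) / 4 * ‖φ‖ := by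
    have hprod : ‖convOp ρ₁ * (convOp (Measure.dirac z) - 1)‖ *
        ‖convOp ρ₂ * (convOp (Measure.dirac z) - 1)‖ ≤ (n₁ z ^ 2 + n₂ z ^ 2) / 2 :=
      (mul_le_mul (h₁ z) (h₂ z) (norm_nonneg _) ((norm_nonneg _).trans (h₁ z))).trans
        (by linarith [two_mul_le_add_sq (n₁ z) (n₂ z)])
    have := (norm_secondDifference_convOp_mul_le ρ₁ ρ₂ φ x z).trans
      (mul_le_mul_of_nonneg_right hprod (norm_nonneg φ))
    rw [norm_div, Real.norm_two]
    linarith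
  rw [hcomm.eq, mul_apply_eq_comp, convOp_sub_one_apply_of_isNegInvariant]
  refine (norm_integral_le_of_norm_le (((hi₁.add hi₂).div_const 4).mul_const ‖φ‖)
    (.of_forall hpoint)).trans_eq ?_
  rw [integral_mul_const, integral_div, integral_add' hi₁ hi₂]

end Convolution

end BCFOperators

/-! ### Isotropic Gaussians -/

section GaussianDensity

variable {E : Type*} [NormedAddCommGroup E] [InnerProductSpace ℝ E]

/-- The density of the centred isotropic Gaussian on `E` whose covariance is `y` times the
identity. -/
noncomputable def gaussianDensity (y : ℝ) (x : E) : ℝ :=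
  (2 * π * y) ^ (-(Module.finrank ℝ E : ℝ) / 2) * exp (-(1 / (2 * y)) * ‖x‖ ^ 2)

variable {y s : ℝ}

lemma gaussianDensity_pos (hy : 0 < y) (x : E) : 0 < gaussianDensity y x := by
  unfold gaussianDensity
  positivity

@[fun_prop]
lemma continuous_gaussianDensity (y : ℝ) : Continuous (gaussianDensity y : E → ℝ) := by
  unfold gaussianDensity
  fun_prop

lemma gaussianDensity_le (hy : 0 < y) (x : E) :
    gaussianDensity y x ≤ (2 * π * y) ^ (-(Module.finrank ℝ E : ℝ) / 2) := by
  refine mul_le_of_le_one_right (by positivity) (exp_le_one_iff.2 ?_)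
  rw [neg_mul, neg_nonpos]
  positivity

lemma log_gaussianDensity (hy : 0 < y) (x : E) :
    log (gaussianDensity y x) =
      -(Module.finrank ℝ E : ℝ) / 2 * log (2 * π * y) - 1 / (2 * y) * ‖x‖ ^ 2 := by
  rw [gaussianDensity, log_mul (by positivity) (by positivity), log_exp, log_rpow (by positivity)]
  ring

lemma gaussianDensity_sub_mul (hy : 0 < y) (hs : 0 < s) (x z : E) :
    gaussianDensity y (x - z) * gaussianDensity s z =
      gaussianDensity (y + s) x * gaussianDensity (y * s / (y + s)) (z - (s / (y + s)) • x) := by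
  have : 0 < y + s := by positivity
  simp only [gaussianDensity]
  rw [mul_mul_mul_comm ((2 * π * y) ^ _), mul_mul_mul_comm ((2 * π * (y + s)) ^ _), ← exp_add,
    ← exp_add, ← mul_rpow (by positivity) (by positivity),
    ← mul_rpow (by positivity) (by positivity)]
  congr 2
  · field_simp
  · rw [@norm_sub_sq_real E, @norm_sub_sq_real E, norm_smul, inner_smul_right,
      real_inner_comm x z, norm_of_nonneg (by positivity)]
    field_simp
    ring

lemma sqrt_gaussianDensity_mul (hy : 0 < y) (x a b : E) :
    √(gaussianDensity y (x - a) * gaussianDensity y (x - b)) =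
      exp (-(‖a - b‖ ^ 2 / (8 * y))) * gaussianDensity y (x - (1 / 2 : ℝ) • (a + b)) := by
  have hpar := parallelogram_law_with_norm ℝ ((1 / 2 : ℝ) • (x - a)) ((1 / 2 : ℝ) • (x - b))
  rw [show (1 / 2 : ℝ) • (x - a) + (1 / 2 : ℝ) • (x - b) = x - (1 / 2 : ℝ) • (a + b) by module,
    show (1 / 2 : ℝ) • (x - a) - (1 / 2 : ℝ) • (x - b) = (1 / 2 : ℝ) • (b - a) by module,
    norm_smul, norm_smul, norm_smul, norm_sub_rev b a,
    show ‖(1 / 2 : ℝ)‖ = 1 / 2 by norm_num] at hpar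
  have hexp : -(1 / (2 * y)) * ‖x - a‖ ^ 2 + -(1 / (2 * y)) * ‖x - b‖ ^ 2 =
      2 * (-(‖a - b‖ ^ 2 / (8 * y)) +
        -(1 / (2 * y)) * ‖x - (1 / 2 : ℝ) • (a + b)‖ ^ 2) := by
    field_simp
    linear_combination 16 * hpar
  have hpos := gaussianDensity_pos hy (x - (1 / 2 : ℝ) • (a + b))
  rw [sqrt_eq_iff_mul_self_eq
    (mul_nonneg (gaussianDensity_pos hy _).le (gaussianDensity_pos hy _).le) (by positivity)]
  simp only [gaussianDensity]
  rw [mul_mul_mul_comm, ← exp_add, hexp, two_mul (_ + _), exp_add, exp_add]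
  ring

variable [FiniteDimensional ℝ E] [MeasurableSpace E] [BorelSpace E]

lemma integral_gaussianDensity (hy : 0 < y) : ∫ x : E, gaussianDensity y x = 1 := by
  simp only [gaussianDensity]
  rw [integral_const_mul, GaussianFourier.integral_rexp_neg_mul_sq_norm (by positivity),
    show π / (1 / (2 * y)) = 2 * π * y by field_simp, ← rpow_add (by positivity), neg_div,
    neg_add_cancel, rpow_zero]

lemma integrable_gaussianDensity (hy : 0 < y) : Integrable (gaussianDensity y : E → ℝ) :=
  .of_integral_ne_zero (by rw [integral_gaussianDensity hy]; exact one_ne_zero)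

lemma integrable_sum_mul_gaussianDensity_sub {ι : Type*} (hy : 0 < y) (t : Finset ι) (a : ι → ℝ)
    (v : ι → E) : Integrable fun x => ∑ i ∈ t, a i * gaussianDensity y (x - v i) :=
  integrable_finsetSum _ fun i _ =>
    ((integrable_gaussianDensity hy).comp_sub_right (v i)).const_mul _

lemma integral_sum_mul_gaussianDensity_sub {ι : Type*} (hy : 0 < y) (t : Finset ι) (a : ι → ℝ)
    (v : ι → E) : ∫ x, ∑ i ∈ t, a i * gaussianDensity y (x - v i) = ∑ i ∈ t, a i := by
  rw [integral_finsetSum _ fun i _ =>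
    ((integrable_gaussianDensity hy).comp_sub_right (v i)).const_mul _]
  refine Finset.sum_congr rfl fun i _ => ?_
  rw [integral_const_mul, integral_sub_right_eq_self (gaussianDensity y),
    integral_gaussianDensity hy, mul_one]

lemma integrable_gaussianDensity_sub_mul (hy : 0 < y) (hs : 0 < s) (x : E) :
    Integrable fun z => gaussianDensity y (x - z) * gaussianDensity s z := by
  simp only [gaussianDensity_sub_mul hy hs]
  exact ((integrable_gaussianDensity (by positivity)).comp_sub_right _).const_mul _

lemma integral_gaussianDensity_sub_mul (hy : 0 < y) (hs : 0 < s) (x : E) :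
    ∫ z, gaussianDensity y (x - z) * gaussianDensity s z = gaussianDensity (y + s) x := by
  simp only [gaussianDensity_sub_mul hy hs]
  rw [integral_const_mul, integral_sub_right_eq_self (gaussianDensity (y * s / (y + s))),
    integral_gaussianDensity (by positivity), mul_one]

end GaussianDensity

section GaussianMeasure

variable {E : Type*} [NormedAddCommGroup E] [InnerProductSpace ℝ E]

/-- The similarity `x ↦ c • V x` as a continuous linear equivalence. -/
noncomputable def scaledIsometry (c : ℝ) (hc : c ≠ 0) (V : E ≃ₗᵢ[ℝ] E) : E ≃L[ℝ] E :=
  V.toContinuousLinearEquiv.trans (ContinuousLinearEquiv.smulLeft (Units.mk0 c hc))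

lemma scaledIsometry_apply {c : ℝ} (hc : c ≠ 0) (V : E ≃ₗᵢ[ℝ] E) (x : E) :
    scaledIsometry c hc V x = c • V x := rfl

variable [FiniteDimensional ℝ E] [MeasurableSpace E] [BorelSpace E] {y s : ℝ}

/-- The centred isotropic Gaussian measure on `E` whose covariance is `y` times the identity; it is
the Dirac mass at `0` for `y ≤ 0`. -/
noncomputable def gaussianMeasure (y : ℝ) : Measure E :=
  (ProbabilityTheory.stdGaussian E).map (√y • ·)

instance isGaussian_gaussianMeasure (y : ℝ) :
    ProbabilityTheory.IsGaussian (gaussianMeasure y : Measure E) :=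
  inferInstanceAs (ProbabilityTheory.IsGaussian
    ((ProbabilityTheory.stdGaussian E).map (√y • ContinuousLinearMap.id ℝ E)))

lemma charFun_gaussianMeasure (y : ℝ) (t : E) :
    charFun (gaussianMeasure y) t = Complex.exp (-‖√y • t‖ ^ 2 / 2) := by
  rw [gaussianMeasure, charFun_map_smul, ProbabilityTheory.charFun_stdGaussian]

lemma gaussianMeasure_conv (hy : 0 ≤ y) (hs : 0 ≤ s) :
    (gaussianMeasure y : Measure E).conv (gaussianMeasure s) = gaussianMeasure (y + s) := by
  refine Measure.ext_of_charFun (funext fun t => ?_)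
  simp only [charFun_conv, charFun_gaussianMeasure, ← Complex.exp_add, norm_smul,
    norm_of_nonneg (sqrt_nonneg _), mul_pow, ← Complex.ofReal_pow, Complex.ofReal_mul,
    sq_sqrt hy, sq_sqrt hs, sq_sqrt (add_nonneg hy hs)]
  push_cast
  ring_nf

lemma gaussianMeasure_map_scaledIsometry (y : ℝ) {c : ℝ} (hc : c ≠ 0) (V : E ≃ₗᵢ[ℝ] E) :
    (gaussianMeasure y : Measure E).map (scaledIsometry c hc V) = gaussianMeasure (c ^ 2 * y) := by
  have hcomp : (gaussianMeasure y : Measure E).map (scaledIsometry c hc V) =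
      (ProbabilityTheory.stdGaussian E).map ((√y * c) • ·) := by
    rw [gaussianMeasure, Measure.map_map (by fun_prop) (by fun_prop)]
    conv_rhs => rw [← ProbabilityTheory.stdGaussian_map V]
    rw [Measure.map_map (by fun_prop) V.continuous.measurable]
    congr 1
    ext x
    simp [scaledIsometry_apply, smul_smul, mul_comm]
  rw [hcomp]
  refine Measure.ext_of_charFun (funext fun t => ?_)
  rw [charFun_gaussianMeasure, charFun_map_smul, ProbabilityTheory.charFun_stdGaussian,
    sqrt_mul (sq_nonneg c), sqrt_sq_eq_abs, norm_smul, norm_smul, norm_mul, norm_mul, norm_eq_abs c,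
    norm_eq_abs |c|, abs_abs, mul_comm ‖√y‖]

instance isNegInvariant_gaussianMeasure (y : ℝ) : (gaussianMeasure y : Measure E).IsNegInvariant :=
  ⟨by
    have h := gaussianMeasure_map_scaledIsometry (E := E) y (neg_ne_zero.2 one_ne_zero)
      (LinearIsometryEquiv.refl ℝ E)
    simp only [neg_sq, one_pow, one_mul] at h
    rw [Measure.neg]
    refine Eq.trans ?_ h
    congr 1
    ext x
    rw [scaledIsometry_apply, neg_one_smul, LinearIsometryEquiv.coe_refl, id]⟩

lemma isProbabilityMeasure_withDensity_gaussianDensity (hy : 0 < y) :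
    IsProbabilityMeasure
      ((volume : Measure E).withDensity fun x => ENNReal.ofReal (gaussianDensity y x)) := by
  constructor
  rw [withDensity_apply _ .univ, setLIntegral_univ,
    ← ofReal_integral_eq_lintegral_ofReal (integrable_gaussianDensity hy)
    (.of_forall fun x => (gaussianDensity_pos hy x).le), integral_gaussianDensity hy,
    ENNReal.ofReal_one]

lemma gaussianMeasure_eq_withDensity (hy : 0 < y) :
    (gaussianMeasure y : Measure E) =
      volume.withDensity fun x => ENNReal.ofReal (gaussianDensity y x) := by
  have := isProbabilityMeasure_withDensity_gaussianDensity (E := E) hy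
  refine Measure.ext_of_charFun (funext fun t => ?_)
  have hb : 0 < ((1 / (2 * y) : ℝ) : ℂ).re := by rw [Complex.ofReal_re]; positivity
  have hfourier := GaussianFourier.integral_cexp_neg_mul_sq_norm_add hb Complex.I t
  rw [charFun_gaussianMeasure, charFun_apply, integral_withDensity_eq_integral_toReal_smul
    (by fun_prop) (.of_forall fun _ => ENNReal.ofReal_lt_top)]
  have hconst : (((2 * π * y) ^ (-(Module.finrank ℝ E : ℝ) / 2) : ℝ) : ℂ) *
      (π / (1 / (2 * y) : ℝ)) ^ (Module.finrank ℝ E / 2 : ℂ) = 1 := by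
    have hcast : (π / (1 / (2 * y) : ℝ) : ℂ) ^ (Module.finrank ℝ E / 2 : ℂ) =
        ((2 * π * y) ^ (Module.finrank ℝ E / 2 : ℝ) : ℝ) := by
      rw [Complex.ofReal_cpow (by positivity)]
      push_cast
      congr 1
      field_simp
    rw [hcast, ← Complex.ofReal_mul, ← rpow_add (by positivity), neg_div, neg_add_cancel,
      rpow_zero, Complex.ofReal_one]
  have hpoint (x : E) : (ENNReal.ofReal (gaussianDensity y x)).toReal •
      Complex.exp (inner ℝ x t * Complex.I) =
      (((2 * π * y) ^ (-(Module.finrank ℝ E : ℝ) / 2) : ℝ) : ℂ) *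
        Complex.exp (-(1 / (2 * y) : ℝ) * ‖x‖ ^ 2 + Complex.I * inner ℝ t x) := by
    rw [ENNReal.toReal_ofReal (gaussianDensity_pos hy x).le, gaussianDensity, Complex.exp_add,
      Complex.real_smul, real_inner_comm, mul_comm Complex.I]
    push_cast
    ring
  simp only [hpoint]
  rw [integral_const_mul, hfourier, ← mul_assoc, hconst, one_mul, norm_smul, norm_eq_abs,
    Complex.I_sq, Complex.ofReal_mul, mul_pow, ← Complex.ofReal_pow, sq_abs, sq_sqrt hy.le]
  congr 1
  push_cast
  field_simp
  norm_num

lemma integral_gaussianMeasure (hy : 0 < y) (f : E → ℝ) :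
    ∫ x, f x ∂(gaussianMeasure y) = ∫ x, gaussianDensity y x * f x := by
  rw [gaussianMeasure_eq_withDensity hy, integral_withDensity_eq_integral_toReal_smul
    (by fun_prop) (.of_forall fun _ => ENNReal.ofReal_lt_top)]
  simp only [ENNReal.toReal_ofReal (gaussianDensity_pos hy _).le, smul_eq_mul]

lemma integrable_gaussianMeasure_iff (hy : 0 < y) (f : E → ℝ) :
    Integrable f (gaussianMeasure y) ↔ Integrable fun x => gaussianDensity y x * f x := by
  rw [gaussianMeasure_eq_withDensity hy, integrable_withDensity_iff_integrable_smul'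
    (by fun_prop) (.of_forall fun _ => ENNReal.ofReal_lt_top)]
  simp only [ENNReal.toReal_ofReal (gaussianDensity_pos hy _).le, smul_eq_mul]

lemma integrable_norm_sq_mul_gaussianDensity_sub (hy : 0 < y) (a : E) :
    Integrable fun x : E => ‖x‖ ^ 2 * gaussianDensity y (x - a) := by
  have hid : MemLp (fun x : E => x) 2 (gaussianMeasure y) :=
    ProbabilityTheory.IsGaussian.memLp_two_id
  have hshift : MemLp (fun x : E => x + a) (2 : ℕ) (gaussianMeasure y) := hid.add (memLp_const a)
  have hmoment := hshift.integrable_norm_pow two_ne_zero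
  simpa only [sub_add_cancel, mul_comm] using
    ((integrable_gaussianMeasure_iff hy _).1 hmoment).comp_sub_right a

lemma tendsto_convOp_gaussianMeasure_apply (φ : E →ᵇ ℝ) (x : E) :
    Tendsto (fun y => convOp (gaussianMeasure y) φ x) (𝓝 0) (𝓝 (φ x)) := by
  have hrescale (y : ℝ) : convOp (gaussianMeasure y) φ x =
      ∫ u, φ (x + √y • u) ∂ProbabilityTheory.stdGaussian E := by
    rw [convOp_apply, gaussianMeasure, integral_map (by fun_prop) (by fun_prop)]
  have hcont : Continuous fun y => ∫ u, φ (x + √y • u) ∂ProbabilityTheory.stdGaussian E :=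
    continuous_of_dominated (fun y => (by fun_prop : Continuous _).aestronglyMeasurable)
      (fun _ => .of_forall fun _ => φ.norm_coe_le_norm _) (integrable_const ‖φ‖)
      (.of_forall fun _ => by fun_prop)
  simpa [hrescale] using hcont.tendsto 0

end GaussianMeasure

/-! ### A quantitative concavity inequality for the entropy -/

section NegMulLog

lemma sq_le_mul_log_add_mul_log {x : ℝ} (hx : |x| < 1) :
    x ^ 2 ≤ (1 + x) * log (1 + x) + (1 - x) * log (1 - x) := by
  have hx2 : |x ^ 2| < 1 := by
    rw [abs_pow]; exact pow_lt_one₀ (abs_nonneg _) hx two_ne_zero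
  have hseries := ((hasSum_log_sub_log_of_abs_lt_one hx).mul_left x).sub
    (hasSum_pow_div_log_of_abs_lt_one hx2)
  have hterm (k : ℕ) : x * (2 * (1 / (2 * (k : ℝ) + 1)) * x ^ (2 * k + 1)) -
      (x ^ 2) ^ (k + 1) / ((k : ℝ) + 1) =
        (x ^ 2) ^ (k + 1) * (1 / ((2 * k + 1) * (k + 1))) := by
    rw [show x ^ (2 * k + 1) = (x ^ 2) ^ k * x by rw [← pow_mul]; ring]
    field_simp
    ring
  simp only [hterm] at hseries
  obtain ⟨hx₁, hx₂⟩ := abs_lt.1 hx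
  calc x ^ 2 = (x ^ 2) ^ (0 + 1) * (1 / ((2 * ((0 : ℕ) : ℝ) + 1) * ((0 : ℕ) + 1))) := by norm_num
    _ ≤ x * (log (1 + x) - log (1 - x)) - -log (1 - x ^ 2) :=
      le_hasSum hseries 0 fun k _ => by positivity
    _ = (1 + x) * log (1 + x) + (1 - x) * log (1 - x) := by
      rw [show 1 - x ^ 2 = (1 + x) * (1 - x) by ring, log_mul (by linarith) (by linarith)]
      ring

lemma negMulLog_add_negMulLog_div_two_le {a b : ℝ} (ha : 0 < a) (hb : 0 < b) :
    (negMulLog a + negMulLog b) / 2 + (a - b) ^ 2 / (4 * (a + b)) ≤ negMulLog ((a + b) / 2) := by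
  obtain ⟨m, x, hm, hx, rfl, rfl⟩ : ∃ m x : ℝ, 0 < m ∧ |x| < 1 ∧ a = m * (1 + x) ∧
      b = m * (1 - x) := by
    refine ⟨(a + b) / 2, (a - b) / (a + b), by positivity, ?_, by field_simp; ring,
      by field_simp; ring⟩
    rw [abs_div, abs_of_pos (add_pos ha hb), div_lt_one (by positivity), abs_lt]
    constructor <;> linarith
  obtain ⟨hx₁, hx₂⟩ := abs_lt.1 hx
  have hsq := mul_le_mul_of_nonneg_left (sq_le_mul_log_add_mul_log hx) hm.le
  have hquot : (m * (1 + x) - m * (1 - x)) ^ 2 / (4 * (m * (1 + x) + m * (1 - x))) =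
      m * x ^ 2 / 2 := by
    rw [show m * (1 + x) + m * (1 - x) = 2 * m by ring]
    field_simp
    ring
  rw [hquot, show (m * (1 + x) + m * (1 - x)) / 2 = m by ring]
  simp only [negMulLog]
  rw [log_mul hm.ne' (by linarith), log_mul hm.ne' (by linarith)]
  linarith

lemma negMulLog_le_of_pos {a c : ℝ} (ha : 0 < a) (hc : 0 < c) :
    negMulLog a ≤ -log c * a - a + c := by
  have hlog := log_le_sub_one_of_pos (div_pos hc ha)
  rw [log_div hc.ne' ha.ne'] at hlog
  have hmul : a * (log c - log a) ≤ a * (c / a - 1) := mul_le_mul_of_nonneg_left hlog ha.le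
  rw [mul_sub a (c / a), mul_div_cancel₀ c ha.ne'] at hmul
  unfold negMulLog
  linarith

lemma negMulLog_add_negMulLog_div_two_add_le {a b c : ℝ} (t : ℝ) (ha : 0 < a) (hb : 0 < b)
    (hc : 0 < c) :
    (negMulLog a + negMulLog b) / 2 + t / 2 * |a - b| - t ^ 2 / 4 * (a + b) ≤
      -log c * ((a + b) / 2) - (a + b) / 2 + c := by
  have hmid := negMulLog_add_negMulLog_div_two_le ha hb
  have htangent := negMulLog_le_of_pos (show 0 < (a + b) / 2 by positivity) hc
  have hsq : t / 2 * |a - b| - t ^ 2 / 4 * (a + b) ≤ (a - b) ^ 2 / (4 * (a + b)) := by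
    rw [le_div_iff₀ (by positivity), ← sq_abs (a - b)]
    linear_combination sq_nonneg (|a - b| - t * (a + b))
  linarith

lemma integral_negMulLog_add_sq_integral_abs_sub_le {Ω : Type*} [MeasurableSpace Ω]
    {μ : Measure Ω} {f g q : Ω → ℝ} (hf : ∀ x, 0 < f x) (hg : ∀ x, 0 < g x) (hq : ∀ x, 0 < q x)
    (hfi : ∫ x, f x ∂μ = 1) (hgi : ∫ x, g x ∂μ = 1) (hqi : ∫ x, q x ∂μ = 1)
    (hfl : Integrable (fun x => negMulLog (f x)) μ)
    (hgl : Integrable (fun x => negMulLog (g x)) μ)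
    (hfgl : Integrable (fun x => -log (q x) * ((f x + g x) / 2)) μ) :
    (∫ x, negMulLog (f x) ∂μ + ∫ x, negMulLog (g x) ∂μ) / 2 + (∫ x, |f x - g x| ∂μ) ^ 2 / 8 ≤
      ∫ x, -log (q x) * ((f x + g x) / 2) ∂μ := by
  have hf' : Integrable f μ := .of_integral_ne_zero (hfi ▸ one_ne_zero)
  have hg' : Integrable g μ := .of_integral_ne_zero (hgi ▸ one_ne_zero)
  have hq' : Integrable q μ := .of_integral_ne_zero (hqi ▸ one_ne_zero)
  have hfg : Integrable (fun x => f x + g x) μ := hf'.add hg'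
  have hlogs : Integrable (fun x => (negMulLog (f x) + negMulLog (g x)) / 2) μ :=
    (hfl.add hgl).div_const 2
  have habs : Integrable (fun x => |f x - g x|) μ := (hf'.sub hg').abs
  obtain ⟨t, habs_eq⟩ : ∃ t, ∫ x, |f x - g x| ∂μ = 2 * t :=
    ⟨_, (mul_div_cancel₀ _ two_ne_zero).symm⟩
  have hleft : Integrable
      (fun x => (negMulLog (f x) + negMulLog (g x)) / 2 + t / 2 * |f x - g x|) μ :=
    hlogs.add (habs.const_mul _)
  have hright : Integrable (fun x => -log (q x) * ((f x + g x) / 2) - (f x + g x) / 2) μ :=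
    hfgl.sub (hfg.div_const 2)
  have hmono := integral_mono (hleft.sub (hfg.const_mul (t ^ 2 / 4))) (hright.add hq')
    fun x => negMulLog_add_negMulLog_div_two_add_le t (hf x) (hg x) (hq x)
  simp only [Pi.add_apply, Pi.sub_apply] at hmono
  rw [integral_sub hleft (hfg.const_mul _), integral_add hlogs (habs.const_mul _),
    integral_add hright hq', integral_sub hfgl (hfg.div_const 2), integral_div, integral_div,
    integral_const_mul, integral_const_mul, integral_add hfl hgl, integral_add hf' hg', hfi, hgi,
    hqi, habs_eq] at hmono
  rw [habs_eq]
  linarith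

end NegMulLog

/-! ### Translation moduli in `L¹` -/

section TranslationModulus

variable {G : Type*} [AddCommGroup G] [MeasurableSpace G]

/-- The `L¹(μ)` modulus of continuity of `f` under translation by `z`. -/
noncomputable def translationModulus (μ : Measure G) (f : G → ℝ) (z : G) : ℝ :=
  ∫ u, |f (u - z) - f u| ∂μ

variable {μ : Measure G} {f : G → ℝ}

lemma translationModulus_nonneg (μ : Measure G) (f : G → ℝ) (z : G) :
    0 ≤ translationModulus μ f z :=
  integral_nonneg fun _ => abs_nonneg _

lemma measurable_translationModulus [MeasurableSub₂ G] [SFinite μ] (hf : Measurable f) :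
    Measurable (translationModulus μ f) := by
  have hjoint : Measurable fun q : G × G => |f (q.2 - q.1) - f q.2| :=
    measurable_abs.comp ((hf.comp (measurable_snd.sub measurable_fst)).sub (hf.comp measurable_snd))
  exact hjoint.stronglyMeasurable.integral_prod_right'.measurable

variable [MeasurableAdd G] [μ.IsAddRightInvariant]

lemma integral_abs_sub_sub_eq_translationModulus (μ : Measure G) [μ.IsAddRightInvariant]
    (f : G → ℝ) (z w : G) :
    ∫ u, |f (u - z) - f (u - w)| ∂μ = translationModulus μ f (z - w) := by
  simpa only [translationModulus, sub_sub, add_sub_cancel] using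
    integral_sub_right_eq_self (fun u => |f (u - (z - w)) - f u|) w

lemma translationModulus_le (hf : Integrable f μ) (z : G) :
    translationModulus μ f z ≤ 2 * ∫ u, |f u| ∂μ := by
  calc translationModulus μ f z ≤ ∫ u, (|f (u - z)| + |f u|) ∂μ :=
        integral_mono ((hf.comp_sub_right z).sub hf).abs ((hf.comp_sub_right z).abs.add hf.abs)
          fun u => abs_sub _ _
    _ = 2 * ∫ u, |f u| ∂μ := by
      rw [integral_add (hf.comp_sub_right z).abs hf.abs,
        integral_sub_right_eq_self (fun u => |f u|), two_mul]

lemma translationModulus_add_le (hf : Integrable f μ) (z w : G) :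
    translationModulus μ f (z + w) ≤ translationModulus μ f z + translationModulus μ f w := by
  have hz := integral_abs_sub_sub_eq_translationModulus μ f (z + w) w
  rw [add_sub_cancel_right] at hz
  have hzw : Integrable (fun u => f (u - (z + w)) - f (u - w)) μ :=
    (hf.comp_sub_right _).sub (hf.comp_sub_right _)
  have hw : Integrable (fun u => f (u - w) - f u) μ := (hf.comp_sub_right w).sub hf
  rw [← hz]
  unfold translationModulus
  rw [← integral_add hzw.abs hw.abs]
  exact integral_mono ((hf.comp_sub_right _).sub hf).abs (hzw.abs.add hw.abs)
    fun u => abs_sub_le _ _ _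

lemma translationModulus_nsmul_le (hf : Integrable f μ) (z : G) (n : ℕ) :
    translationModulus μ f (n • z) ≤ n * translationModulus μ f z := by
  induction n with
  | zero => simp [translationModulus]
  | succ n ih =>
    rw [succ_nsmul, Nat.cast_succ, add_one_mul]
    exact (translationModulus_add_le hf _ _).trans (by gcongr)

lemma translationModulus_integral_sub_le [MeasurableSub₂ G] [SFinite μ] (hfm : Measurable f)
    (hf : Integrable f μ) {ρ : Measure G} [IsProbabilityMeasure ρ]
    (hρ : ∀ u, Integrable (fun w => f (u - w)) ρ) (z : G) :
    translationModulus μ (fun u => ∫ w, f (u - w) ∂ρ) z ≤ translationModulus μ f z := by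
  have hfiber (w : G) : ∫ u, ‖f (u - z - w) - f (u - w)‖ ∂μ = translationModulus μ f z := by
    simp only [sub_sub, norm_eq_abs]
    rw [integral_abs_sub_sub_eq_translationModulus, add_sub_cancel_right]
  have hmeas : Measurable fun q : G × G => f (q.2 - z - q.1) - f (q.2 - q.1) := by fun_prop
  have hprod : Integrable (fun q : G × G => f (q.2 - z - q.1) - f (q.2 - q.1)) (ρ.prod μ) := by
    rw [integrable_prod_iff hmeas.aestronglyMeasurable]
    refine ⟨.of_forall fun w => ?_, ?_⟩
    · simp only [sub_sub]
      exact (hf.comp_sub_right _).sub (hf.comp_sub_right _)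
    · simp only [hfiber]
      exact integrable_const _
  calc translationModulus μ (fun u => ∫ w, f (u - w) ∂ρ) z
      = ∫ u, ‖∫ w, (f (u - z - w) - f (u - w)) ∂ρ‖ ∂μ := by
        simp only [translationModulus, norm_eq_abs, integral_sub (hρ _) (hρ _)]
    _ ≤ ∫ u, ∫ w, ‖f (u - z - w) - f (u - w)‖ ∂ρ ∂μ :=
        integral_mono hprod.integral_prod_right.norm hprod.norm.integral_prod_right
          fun u => norm_integral_le_integral_norm _
    _ = ∫ w, ∫ u, ‖f (u - z - w) - f (u - w)‖ ∂μ ∂ρ := (integral_integral_swap hprod.norm).symm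
    _ = translationModulus μ f z := by simp only [hfiber, integral_const, probReal_univ, one_smul]

end TranslationModulus

section GaussianSqModulus

variable {E : Type*} [NormedAddCommGroup E] [InnerProductSpace ℝ E] [FiniteDimensional ℝ E]
  [MeasurableSpace E] [BorelSpace E] {f g : E → ℝ} {w : ℝ}

/-- The mean square of the `L¹` translation modulus of `f` over Gaussian translations of
variance `w`. -/
noncomputable def gaussianSqModulus (f : E → ℝ) (w : ℝ) : ℝ :=
  ∫ z, translationModulus volume f z ^ 2 ∂(gaussianMeasure w)

lemma gaussianSqModulus_nonneg (f : E → ℝ) (w : ℝ) : 0 ≤ gaussianSqModulus f w :=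
  integral_nonneg fun _ => sq_nonneg _

lemma integrable_translationModulus_sq (hfm : Measurable f) (hf : Integrable f) (ρ : Measure E)
    [IsFiniteMeasure ρ] : Integrable (fun z => translationModulus volume f z ^ 2) ρ := by
  refine .of_bound ((measurable_translationModulus hfm).pow_const 2).aestronglyMeasurable
    ((2 * ∫ u, |f u|) ^ 2) (.of_forall fun z => ?_)
  rw [norm_of_nonneg (sq_nonneg _)]
  exact pow_le_pow_left₀ (translationModulus_nonneg _ _ _) (translationModulus_le hf z) 2

lemma gaussianSqModulus_sq_mul (hfm : Measurable f) {c : ℝ} (hc : c ≠ 0) (w : ℝ) :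
    gaussianSqModulus f (c ^ 2 * w) =
      ∫ z, translationModulus volume f (c • z) ^ 2 ∂(gaussianMeasure w) := by
  rw [gaussianSqModulus, ← gaussianMeasure_map_scaledIsometry w hc (.refl ℝ E),
    integral_map (scaledIsometry c hc _).continuous.aemeasurable
      ((measurable_translationModulus hfm).pow_const 2).aestronglyMeasurable]
  rfl

lemma gaussianSqModulus_mono (hfm : Measurable f) (hf : Integrable f)
    (h : ∀ z, translationModulus volume g z ≤ translationModulus volume f z) :
    gaussianSqModulus g w ≤ gaussianSqModulus f w :=
  integral_mono_of_nonneg (.of_forall fun _ => sq_nonneg _)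
    (integrable_translationModulus_sq hfm hf _)
    (.of_forall fun z => pow_le_pow_left₀ (translationModulus_nonneg _ _ _) (h z) 2)

lemma gaussianSqModulus_natCast_sq_mul_le (hfm : Measurable f) (hf : Integrable f) (w : ℝ) {n : ℕ}
    (hn : n ≠ 0) : gaussianSqModulus f ((n : ℝ) ^ 2 * w) ≤ (n : ℝ) ^ 2 * gaussianSqModulus f w := by
  rw [gaussianSqModulus_sq_mul hfm (Nat.cast_ne_zero.2 hn), gaussianSqModulus,
    ← integral_const_mul]
  refine integral_mono_of_nonneg (.of_forall fun _ => sq_nonneg _)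
    ((integrable_translationModulus_sq hfm hf _).const_mul _) (.of_forall fun z => ?_)
  beta_reduce
  rw [← mul_pow, Nat.cast_smul_eq_nsmul]
  exact pow_le_pow_left₀ (translationModulus_nonneg _ _ _) (translationModulus_nsmul_le hf z n) 2

end GaussianSqModulus

/-! ### Gaussian smoothings of finitely supported laws -/

/-- A finitely supported probability law on `E`: the atom `x ∈ support` has mass `weight x`. -/
structure FiniteLaw (E : Type*) where
  support : Finset E
  weight : E → ℝ
  weight_pos : ∀ x ∈ support, 0 < weight x
  sum_weight : ∑ x ∈ support, weight x = 1

namespace FiniteLaw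

lemma support_nonempty {E : Type*} (X : FiniteLaw E) : X.support.Nonempty :=
  Finset.nonempty_of_sum_ne_zero (X.sum_weight ▸ one_ne_zero)

section Density

variable {E : Type*} [NormedAddCommGroup E] [InnerProductSpace ℝ E] (X : FiniteLaw E) {y s Y : ℝ}

/-- The density of the convolution of the law `X` with the isotropic Gaussian of variance `y`. -/
noncomputable def density (y : ℝ) (u : E) : ℝ :=
  ∑ x ∈ X.support, X.weight x * gaussianDensity y (u - x)

lemma density_pos (hy : 0 < y) (u : E) : 0 < X.density y u :=
  Finset.sum_pos (fun x hx => mul_pos (X.weight_pos x hx) (gaussianDensity_pos hy _))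
    X.support_nonempty

@[fun_prop]
lemma continuous_density (y : ℝ) : Continuous (X.density y) := by
  unfold density
  fun_prop

lemma density_le (hy : 0 < y) (u : E) :
    X.density y u ≤ (2 * π * y) ^ (-(Module.finrank ℝ E : ℝ) / 2) := by
  calc X.density y u
      ≤ ∑ x ∈ X.support, X.weight x * (2 * π * y) ^ (-(Module.finrank ℝ E : ℝ) / 2) :=
        Finset.sum_le_sum fun x hx =>
          mul_le_mul_of_nonneg_left (gaussianDensity_le hy _) (X.weight_pos x hx).le
    _ = _ := by rw [← Finset.sum_mul, X.sum_weight, one_mul]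

lemma weight_mul_gaussianDensity_le_density (hy : 0 < y) {x : E} (hx : x ∈ X.support) (u : E) :
    X.weight x * gaussianDensity y (u - x) ≤ X.density y u :=
  Finset.single_le_sum (f := fun x => X.weight x * gaussianDensity y (u - x))
    (fun x hx => (mul_pos (X.weight_pos x hx) (gaussianDensity_pos hy _)).le) hx

lemma continuous_log_density (hy : 0 < y) : Continuous fun u => log (X.density y u) :=
  (X.continuous_density y).log fun u => (X.density_pos hy u).ne'

lemma exists_abs_log_density_le (hy : 0 < y) :
    ∃ C D : ℝ, ∀ u, |log (X.density y u)| ≤ C + D * ‖u‖ ^ 2 := by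
  obtain ⟨x, hx⟩ := X.support_nonempty
  set A := log ((2 * π * y) ^ (-(Module.finrank ℝ E : ℝ) / 2))
  set B := log (X.weight x) + -(Module.finrank ℝ E : ℝ) / 2 * log (2 * π * y) - 1 / y * ‖x‖ ^ 2
    with hB
  refine ⟨|A| + |B|, 1 / y, fun u => ?_⟩
  have hupper : log (X.density y u) ≤ A := log_le_log (X.density_pos hy u) (X.density_le hy u)
  have hatom := log_le_log (mul_pos (X.weight_pos x hx) (gaussianDensity_pos hy _))
    (X.weight_mul_gaussianDensity_le_density hy hx u)
  rw [log_mul (X.weight_pos x hx).ne' (gaussianDensity_pos hy _).ne', log_gaussianDensity hy]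
    at hatom
  have hdist : 1 / (2 * y) * ‖u - x‖ ^ 2 ≤ 1 / y * ‖u‖ ^ 2 + 1 / y * ‖x‖ ^ 2 := by
    calc 1 / (2 * y) * ‖u - x‖ ^ 2 ≤ 1 / (2 * y) * (2 * (‖u‖ ^ 2 + ‖x‖ ^ 2)) := by
          gcongr
          exact (pow_le_pow_left₀ (norm_nonneg _) (norm_sub_le u x) 2).trans add_sq_le
      _ = 1 / y * ‖u‖ ^ 2 + 1 / y * ‖x‖ ^ 2 := by field_simp
  have hlower : B - 1 / y * ‖u‖ ^ 2 ≤ log (X.density y u) := by linarith [hB]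
  have hnonneg : 0 ≤ 1 / y * ‖u‖ ^ 2 := by positivity
  rw [abs_le]
  constructor
  · linarith [hlower, neg_abs_le B, abs_nonneg A]
  · linarith [le_abs_self A, abs_nonneg B]

variable [FiniteDimensional ℝ E] [MeasurableSpace E] [BorelSpace E]

lemma integrable_density (hy : 0 < y) : Integrable (X.density y) :=
  integrable_sum_mul_gaussianDensity_sub hy _ _ id

lemma integral_density (hy : 0 < y) : ∫ u, X.density y u = 1 :=
  (integral_sum_mul_gaussianDensity_sub hy _ _ id).trans X.sum_weight

lemma integrable_density_sub_left (hy : 0 < y) (u : E) (ρ : Measure E) [IsFiniteMeasure ρ] :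
    Integrable (fun z => X.density y (u - z)) ρ := by
  refine .of_bound (by fun_prop) ((2 * π * y) ^ (-(Module.finrank ℝ E : ℝ) / 2))
    (.of_forall fun z => ?_)
  rw [norm_of_nonneg (X.density_pos hy _).le]
  exact X.density_le hy _

lemma integral_density_sub_gaussianMeasure (hy : 0 < y) (hs : 0 < s) (u : E) :
    ∫ z, X.density y (u - z) ∂(gaussianMeasure s) = X.density (y + s) u := by
  have hsum (z : E) : gaussianDensity s z * X.density y (u - z) =
      ∑ x ∈ X.support, X.weight x * (gaussianDensity y (u - x - z) * gaussianDensity s z) := by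
    rw [density, Finset.mul_sum]
    refine Finset.sum_congr rfl fun x _ => ?_
    rw [sub_right_comm u z x]
    ring
  simp only [integral_gaussianMeasure hs, hsum]
  rw [integral_finsetSum _ fun x _ =>
    (integrable_gaussianDensity_sub_mul hy hs (u - x)).const_mul _]
  simp only [integral_const_mul, integral_gaussianDensity_sub_mul hy hs]
  rfl

lemma translationModulus_density_anti (hy : 0 < y) (hyY : y ≤ Y) (z : E) :
    translationModulus volume (X.density Y) z ≤ translationModulus volume (X.density y) z := by
  rcases hyY.eq_or_lt with rfl | hlt
  · rfl
  have hconv : X.density Y = fun u => ∫ w, X.density y (u - w) ∂(gaussianMeasure (Y - y)) := by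
    funext u
    rw [X.integral_density_sub_gaussianMeasure hy (sub_pos.2 hlt), add_sub_cancel]
  rw [hconv]
  exact translationModulus_integral_sub_le (X.continuous_density y).measurable
    (X.integrable_density hy) (fun u => X.integrable_density_sub_left hy u _) z

lemma integrable_norm_sq_mul_density_sub (hy : 0 < y) (z : E) :
    Integrable fun u => ‖u‖ ^ 2 * X.density y (u - z) := by
  simp only [density, Finset.mul_sum, mul_left_comm (‖_‖ ^ 2), sub_sub]
  exact integrable_finsetSum _ fun x _ =>
    (integrable_norm_sq_mul_gaussianDensity_sub hy _).const_mul _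

lemma integrable_log_density_mul_density_sub (hY : 0 < Y) (hy : 0 < y) (z : E) :
    Integrable fun u => log (X.density Y u) * X.density y (u - z) := by
  obtain ⟨C, D, hlog⟩ := X.exists_abs_log_density_le hY
  have hbound : Integrable fun u =>
      C * X.density y (u - z) + D * (‖u‖ ^ 2 * X.density y (u - z)) :=
    (((X.integrable_density hy).comp_sub_right z).const_mul C).add
      ((X.integrable_norm_sq_mul_density_sub hy z).const_mul D)
  refine hbound.mono' ((X.continuous_log_density hY).mul
    (by fun_prop)).aestronglyMeasurable (.of_forall fun u => ?_)
  rw [norm_mul, norm_of_nonneg (X.density_pos hy _).le, norm_eq_abs, ← mul_assoc, ← add_mul]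
  exact mul_le_mul_of_nonneg_right (hlog u) (X.density_pos hy _).le

lemma integrable_negMulLog_density (hy : 0 < y) :
    Integrable fun u => negMulLog (X.density y u) := by
  simpa only [sub_zero, mul_comm, neg_mul, negMulLog, Pi.neg_def] using
    (X.integrable_log_density_mul_density_sub hy hy 0).neg

end Density

/-! ### Differential entropy and translation moduli -/

section Entropy

variable {E : Type*} [NormedAddCommGroup E] [InnerProductSpace ℝ E] [FiniteDimensional ℝ E]
  [MeasurableSpace E] [BorelSpace E] (X : FiniteLaw E) {y s Y w : ℝ}

/-- The differential entropy of the convolution of `X` with the Gaussian of variance `y`. -/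
noncomputable def diffEntropy (y : ℝ) : ℝ := ∫ u, negMulLog (X.density y u)

/-- The cross entropy of the translate by `z` of the smoothing of `X` at variance `y`, relative to
the smoothing at variance `Y`. -/
noncomputable def crossEntropy (Y y : ℝ) (z : E) : ℝ :=
  ∫ u, -log (X.density Y u) * X.density y (u - z)

lemma integrable_prod_neg_log_density_mul (hY : 0 < Y) (hy : 0 < y) (hs : 0 < s) :
    Integrable (fun q : E × E => -log (X.density Y q.2) * X.density y (q.2 - q.1))
      ((gaussianMeasure s).prod volume) := by
  have hcont : Continuous fun q : E × E => -log (X.density Y q.2) * X.density y (q.2 - q.1) :=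
    ((X.continuous_log_density hY).comp continuous_snd).neg.mul (by fun_prop)
  rw [integrable_prod_iff' hcont.aestronglyMeasurable]
  refine ⟨.of_forall fun u => (X.integrable_density_sub_left hy u _).const_mul
    (-log (X.density Y u)), ?_⟩
  refine (X.integrable_log_density_mul_density_sub hY (add_pos hy hs) 0).norm.congr
    (.of_forall fun u => ?_)
  simp only [norm_mul, norm_neg, sub_zero, norm_of_nonneg (X.density_pos hy _).le,
    norm_of_nonneg (X.density_pos (add_pos hy hs) _).le, integral_const_mul,
    X.integral_density_sub_gaussianMeasure hy hs]

lemma integrable_crossEntropy (hY : 0 < Y) (hy : 0 < y) (hs : 0 < s) :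
    Integrable (X.crossEntropy Y y) (gaussianMeasure s) :=
  (X.integrable_prod_neg_log_density_mul hY hy hs).integral_prod_left

lemma integral_crossEntropy (hy : 0 < y) (hs : 0 < s) :
    ∫ z, X.crossEntropy (y + s) y z ∂(gaussianMeasure s) = X.diffEntropy (y + s) := by
  unfold crossEntropy
  rw [integral_integral_swap (X.integrable_prod_neg_log_density_mul (add_pos hy hs) hy hs)]
  simp only [integral_const_mul, X.integral_density_sub_gaussianMeasure hy hs]
  simp only [diffEntropy, negMulLog, neg_mul, mul_comm (log _)]

lemma diffEntropy_add_sq_translationModulus_le (hY : 0 < Y) (hy : 0 < y) (z : E) :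
    X.diffEntropy y + translationModulus volume (X.density y) ((2 : ℝ) • z) ^ 2 / 8 ≤
      (X.crossEntropy Y y z + X.crossEntropy Y y (-z)) / 2 := by
  have hentropy (a : E) : ∫ u, negMulLog (X.density y (u - a)) = X.diffEntropy y :=
    integral_sub_right_eq_self (fun u => negMulLog (X.density y u)) a
  have hmass (a : E) : ∫ u, X.density y (u - a) = 1 :=
    (integral_sub_right_eq_self (X.density y) a).trans (X.integral_density hy)
  have hcross (a : E) : Integrable fun u => -log (X.density Y u) * X.density y (u - a) := by
    simpa only [neg_mul, Pi.neg_def] using (X.integrable_log_density_mul_density_sub hY hy a).neg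
  have hmain := integral_negMulLog_add_sq_integral_abs_sub_le
    (fun u => X.density_pos hy (u - z)) (fun u => X.density_pos hy (u - -z)) (X.density_pos hY)
    (hmass z) (hmass (-z)) (X.integral_density hY)
    ((X.integrable_negMulLog_density hy).comp_sub_right z)
    ((X.integrable_negMulLog_density hy).comp_sub_right (-z))
    (by simpa only [mul_div_assoc', mul_add, Pi.add_apply] using
      ((hcross z).add (hcross (-z))).div_const 2)
  simp only [mul_div_assoc', mul_add] at hmain
  rw [hentropy, hentropy, add_self_div_two, integral_abs_sub_sub_eq_translationModulus,
    integral_div, integral_add (hcross z) (hcross (-z)), sub_neg_eq_add, ← two_smul ℝ z] at hmain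
  exact hmain

/-- Translating the smoothing at variance `y` by `± z`, with `z` Gaussian of variance `s`, and
averaging gives the smoothing at variance `y + s`; strict concavity of the entropy does the rest. -/
lemma gaussianSqModulus_density_le (hy : 0 < y) (hs : 0 < s) :
    gaussianSqModulus (X.density y) (4 * s) ≤ 8 * (X.diffEntropy (y + s) - X.diffEntropy y) := by
  have hmeas := (X.continuous_density y).measurable
  have hsq : Integrable (fun z : E => translationModulus volume (X.density y) ((2 : ℝ) • z) ^ 2)
      (gaussianMeasure s) := by
    have : IsProbabilityMeasure ((gaussianMeasure s : Measure E).map ((2 : ℝ) • ·)) :=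
      Measure.isProbabilityMeasure_map (by fun_prop)
    exact (integrable_translationModulus_sq hmeas (X.integrable_density hy) _).comp_measurable
      (by fun_prop)
  have hcross := X.integrable_crossEntropy (add_pos hy hs) hy hs
  have hmono := integral_mono ((integrable_const (X.diffEntropy y)).add (hsq.div_const 8))
    ((hcross.add hcross.comp_neg).div_const 2)
    fun z => X.diffEntropy_add_sq_translationModulus_le (add_pos hy hs) hy z
  simp only [Pi.add_apply] at hmono
  rw [integral_add (integrable_const _) (hsq.div_const 8), integral_div, integral_div,
    integral_add hcross hcross.comp_neg, integral_neg_eq_self, X.integral_crossEntropy hy hs,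
    integral_const, probReal_univ, one_smul, ← gaussianSqModulus_sq_mul hmeas two_ne_zero] at hmono
  norm_num at hmono
  linarith

lemma diffEntropy_mono (hy : 0 < y) (hyY : y ≤ Y) : X.diffEntropy y ≤ X.diffEntropy Y := by
  rcases hyY.eq_or_lt with rfl | hlt
  · rfl
  · have hstep := X.gaussianSqModulus_density_le hy (sub_pos.2 hlt)
    rw [add_sub_cancel] at hstep
    linarith [gaussianSqModulus_nonneg (X.density y) (4 * (Y - y))]

lemma gaussianSqModulus_density_anti (hy : 0 < y) (hyY : y ≤ Y) :
    gaussianSqModulus (X.density Y) w ≤ gaussianSqModulus (X.density y) w :=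
  gaussianSqModulus_mono (X.continuous_density y).measurable (X.integrable_density hy)
    (X.translationModulus_density_anti hy hyY)

lemma natCast_mul_gaussianSqModulus_density_le (hy : 0 < y) (hs : 0 < s) (N : ℕ)
    (hN : y + N * s ≤ Y) :
    N * gaussianSqModulus (X.density Y) (4 * s) ≤
      8 * (X.diffEntropy (y + N * s) - X.diffEntropy y) := by
  induction N with
  | zero => simp
  | succ N ih =>
    push_cast at hN ⊢
    have hN' : y + N * s ≤ Y := by linarith
    have hpos : 0 < y + N * s := by positivity
    have hstep := X.gaussianSqModulus_density_le hpos hs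
    rw [show y + N * s + s = y + (N + 1) * s by ring] at hstep
    linarith [ih hN', X.gaussianSqModulus_density_anti (w := 4 * s) hpos hN']

lemma gaussianSqModulus_density_mul_le (hy : 0 < y) (hyY : y ≤ Y) (hs : 0 < s) {n : ℕ}
    (hn : n ≠ 0) :
    gaussianSqModulus (X.density Y) (4 * s) * ((Y - y) / s - 1 / (n : ℝ) ^ 2) ≤
      8 * (X.diffEntropy Y - X.diffEntropy y) := by
  have : (0 : ℝ) < n := by positivity
  set Q := gaussianSqModulus (X.density Y) (4 * (s / (n : ℝ) ^ 2))
  have hrefine : gaussianSqModulus (X.density Y) (4 * s) ≤ (n : ℝ) ^ 2 * Q := by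
    convert gaussianSqModulus_natCast_sq_mul_le (X.continuous_density Y).measurable
      (X.integrable_density (hy.trans_le hyY)) (4 * (s / (n : ℝ) ^ 2)) hn using 2
    field_simp
  set N := ⌊(Y - y) / (s / (n : ℝ) ^ 2)⌋₊
  have hN : (Y - y) / (s / (n : ℝ) ^ 2) < N + 1 := Nat.lt_floor_add_one _
  have hNle : y + N * (s / (n : ℝ) ^ 2) ≤ Y := by
    have hfloor : N ≤ (Y - y) / (s / (n : ℝ) ^ 2) :=
      Nat.floor_le (div_nonneg (sub_nonneg.2 hyY) (by positivity))
    rw [le_div_iff₀ (by positivity)] at hfloor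
    linarith
  have hfraction : (Y - y) / s - 1 / (n : ℝ) ^ 2 ≤ N / (n : ℝ) ^ 2 := by
    rw [show (Y - y) / (s / (n : ℝ) ^ 2) = (n : ℝ) ^ 2 * ((Y - y) / s) by field_simp] at hN
    rw [le_div_iff₀ (by positivity), sub_mul, one_div_mul_cancel (by positivity)]
    linarith
  calc gaussianSqModulus (X.density Y) (4 * s) * ((Y - y) / s - 1 / (n : ℝ) ^ 2)
      ≤ gaussianSqModulus (X.density Y) (4 * s) * (N / (n : ℝ) ^ 2) := by
        gcongr
        exact gaussianSqModulus_nonneg _ _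
    _ ≤ (n : ℝ) ^ 2 * Q * (N / (n : ℝ) ^ 2) := by gcongr
    _ = N * Q := by field_simp
    _ ≤ 8 * (X.diffEntropy (y + N * (s / (n : ℝ) ^ 2)) - X.diffEntropy y) :=
      X.natCast_mul_gaussianSqModulus_density_le hy (by positivity) N hNle
    _ ≤ 8 * (X.diffEntropy Y - X.diffEntropy y) := by
      gcongr
      exact X.diffEntropy_mono (by positivity) hNle

/-- Summing `gaussianSqModulus_density_le` over ever finer subdivisions of `[y, Y]` replaces the
entropy increment by its average rate. -/
lemma gaussianSqModulus_density_le_div (hy : 0 < y) (hyY : y < Y) (hw : 0 < w) :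
    gaussianSqModulus (X.density Y) w ≤
      2 * w * ((X.diffEntropy Y - X.diffEntropy y) / (Y - y)) := by
  have hlim : Tendsto (fun n : ℕ => gaussianSqModulus (X.density Y) w *
      ((Y - y) / (w / 4) - 1 / (n : ℝ) ^ 2)) atTop
      (𝓝 (gaussianSqModulus (X.density Y) w * ((Y - y) / (w / 4) - 0))) :=
    ((tendsto_const_div_pow (1 : ℝ) 2 two_ne_zero).comp
      tendsto_natCast_atTop_atTop).const_sub _ |>.const_mul _
  have hle := le_of_tendsto hlim <| (eventually_ne_atTop 0).mono fun n hn => by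
    simpa only [mul_div_cancel₀ w four_ne_zero] using
      X.gaussianSqModulus_density_mul_le hy hyY.le (show 0 < w / 4 by positivity) hn
  rw [sub_zero, ← mul_div_assoc, div_le_iff₀ (by positivity)] at hle
  rw [← mul_div_assoc, le_div_iff₀ (sub_pos.2 hyY)]
  linarith

end Entropy
end FiniteLaw

section LogSum

lemma mul_log_sum_le {ι : Type*} {t : Finset ι} {a : ι → ℝ} (ha : ∀ i ∈ t, 0 < a i) {i : ι}
    (hi : i ∈ t) :
    a i * log (∑ j ∈ t, a j) ≤ a i * log (a i) + 2 * (∑ j ∈ t, √(a i * a j) - a i) := by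
  set r := ∑ j ∈ t, √(a j)
  have hai : 0 < √(a i) := sqrt_pos.2 (ha i hi)
  have hr : 0 < r := Finset.sum_pos (fun j hj => sqrt_pos.2 (ha j hj)) ⟨i, hi⟩
  have hsum : ∑ j ∈ t, a j ≤ r ^ 2 := by
    calc ∑ j ∈ t, a j = ∑ j ∈ t, √(a j) ^ 2 :=
          Finset.sum_congr rfl fun j hj => (sq_sqrt (ha j hj).le).symm
      _ ≤ r ^ 2 := Finset.sum_sq_le_sq_sum_of_nonneg fun j _ => sqrt_nonneg _
  have hlog : log (∑ j ∈ t, a j) ≤ log (a i) + 2 * (r / √(a i) - 1) := by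
    have hratio := log_le_sub_one_of_pos (div_pos hr hai)
    rw [log_div hr.ne' hai.ne', log_sqrt (ha i hi).le] at hratio
    have hmono := log_le_log (Finset.sum_pos ha ⟨i, hi⟩) hsum
    rw [log_pow, Nat.cast_ofNat] at hmono
    linarith
  have hcross : ∑ j ∈ t, √(a i * a j) = a i * (r / √(a i)) := by
    simp only [sqrt_mul (ha i hi).le, ← Finset.mul_sum]
    rw [mul_div_assoc', eq_div_iff hai.ne', mul_right_comm, mul_self_sqrt (ha i hi).le]
  rw [hcross]
  linarith [mul_le_mul_of_nonneg_left hlog (ha i hi).le]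

end LogSum

namespace FiniteLaw

section EntropyBounds

variable {E : Type*} [NormedAddCommGroup E] [InnerProductSpace ℝ E] (X : FiniteLaw E) {y D R : ℝ}

lemma weight_le_one {E : Type*} (X : FiniteLaw E) {x : E} (hx : x ∈ X.support) :
    X.weight x ≤ 1 := by
  rw [← X.sum_weight]
  exact Finset.single_le_sum (fun i hi => (X.weight_pos i hi).le) hx

lemma sqrt_weight_mul_gaussianDensity_le (hy : 0 < y) (hD : 0 ≤ D) {x x' : E}
    (hx : x ∈ X.support) (hx' : x' ∈ X.support) (hdist : D ≤ ‖x - x'‖) (u : E) :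
    √(X.weight x * gaussianDensity y (u - x) * (X.weight x' * gaussianDensity y (u - x'))) ≤
      exp (-(D ^ 2 / (8 * y))) * gaussianDensity y (u - (1 / 2 : ℝ) • (x + x')) := by
  have hpos (v : E) : 0 < gaussianDensity y v := gaussianDensity_pos hy v
  calc √(X.weight x * gaussianDensity y (u - x) * (X.weight x' * gaussianDensity y (u - x')))
      ≤ √(gaussianDensity y (u - x) * gaussianDensity y (u - x')) := by
        refine sqrt_le_sqrt (mul_le_mul ?_ ?_ ?_ (hpos _).le)
        · exact mul_le_of_le_one_left (hpos _).le (X.weight_le_one hx)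
        · exact mul_le_of_le_one_left (hpos _).le (X.weight_le_one hx')
        · exact (mul_pos (X.weight_pos x' hx') (hpos _)).le
    _ = exp (-(‖x - x'‖ ^ 2 / (8 * y))) * gaussianDensity y (u - (1 / 2 : ℝ) • (x + x')) :=
      sqrt_gaussianDensity_mul hy u x x'
    _ ≤ exp (-(D ^ 2 / (8 * y))) * gaussianDensity y (u - (1 / 2 : ℝ) • (x + x')) := by
      have := (hpos (u - (1 / 2 : ℝ) • (x + x'))).le
      gcongr

lemma density_mul_log_density_le (hy : 0 < y) (hD : 0 ≤ D)
    (hsep : ∀ x ∈ X.support, ∀ x' ∈ X.support, x ≠ x' → D ≤ ‖x - x'‖) (u : E) :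
    X.density y u * log (X.density y u) ≤
      ∑ x ∈ X.support, X.weight x *
        (log (X.weight x) - (Module.finrank ℝ E : ℝ) / 2 * log (2 * π * y)) *
          gaussianDensity y (u - x) +
      ∑ q ∈ X.support ×ˢ X.support,
        2 * exp (-(D ^ 2 / (8 * y))) * gaussianDensity y (u - (1 / 2 : ℝ) • (q.1 + q.2)) := by
  classical
  have hpos (v : E) : 0 < gaussianDensity y v := gaussianDensity_pos hy v
  have hwpos (x) (hx : x ∈ X.support) : 0 < X.weight x * gaussianDensity y (u - x) :=
    mul_pos (X.weight_pos x hx) (hpos _)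
  rw [Finset.sum_product, ← Finset.sum_add_distrib]
  conv_lhs => rw [density, Finset.sum_mul]
  refine Finset.sum_le_sum fun x hx => ?_
  refine (mul_log_sum_le hwpos hx).trans (add_le_add ?_ ?_)
  · rw [log_mul (X.weight_pos x hx).ne' (hpos _).ne', log_gaussianDensity hy, mul_right_comm]
    refine mul_le_mul_of_nonneg_right (mul_le_mul_of_nonneg_left ?_ (X.weight_pos x hx).le)
      (hpos _).le
    have : 0 ≤ 1 / (2 * y) * ‖u - x‖ ^ 2 := by positivity
    linarith
  · rw [← Finset.add_sum_erase _ _ hx, sqrt_mul_self (hwpos x hx).le, add_sub_cancel_left]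
    simp only [mul_assoc (2 : ℝ)]
    rw [← Finset.mul_sum]
    refine mul_le_mul_of_nonneg_left ((Finset.sum_le_sum fun x' hx' => ?_).trans
      (Finset.sum_le_sum_of_subset_of_nonneg (Finset.erase_subset x _)
        fun x' _ _ => mul_nonneg (exp_nonneg _) (hpos _).le)) two_pos.le
    obtain ⟨hne, hx'⟩ := Finset.mem_erase.1 hx'
    exact X.sqrt_weight_mul_gaussianDensity_le hy hD hx hx' (hsep x hx x' hx' hne.symm) u

variable [FiniteDimensional ℝ E] [MeasurableSpace E] [BorelSpace E]

lemma le_diffEntropy_of_separated (hy : 0 < y) (hD : 0 ≤ D)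
    (hsep : ∀ x ∈ X.support, ∀ x' ∈ X.support, x ≠ x' → D ≤ ‖x - x'‖) :
    ∑ x ∈ X.support, negMulLog (X.weight x) + (Module.finrank ℝ E : ℝ) / 2 * log (2 * π * y) -
      2 * (X.support.card : ℝ) ^ 2 * exp (-(D ^ 2 / (8 * y))) ≤ X.diffEntropy y := by
  have hentropy : ∫ u, X.density y u * log (X.density y u) = -X.diffEntropy y := by
    simp only [diffEntropy, negMulLog, neg_mul, integral_neg, neg_neg]
  have hint : Integrable fun u => X.density y u * log (X.density y u) := by
    simpa only [negMulLog, neg_mul, Pi.neg_def, neg_neg] using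
      (X.integrable_negMulLog_density hy).neg
  have hdiag := integrable_sum_mul_gaussianDensity_sub hy X.support (fun x => X.weight x *
    (log (X.weight x) - (Module.finrank ℝ E : ℝ) / 2 * log (2 * π * y))) (fun x => x)
  have hcross := integrable_sum_mul_gaussianDensity_sub hy (X.support ×ˢ X.support)
    (fun _ => 2 * exp (-(D ^ 2 / (8 * y)))) (fun q : E × E => (1 / 2 : ℝ) • (q.1 + q.2))
  have hmono := integral_mono hint (hdiag.add hcross) (X.density_mul_log_density_le hy hD hsep)
  rw [hentropy, integral_add' hdiag hcross, integral_sum_mul_gaussianDensity_sub hy,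
    integral_sum_mul_gaussianDensity_sub hy] at hmono
  have hweights : ∑ x ∈ X.support, X.weight x *
      (log (X.weight x) - (Module.finrank ℝ E : ℝ) / 2 * log (2 * π * y)) =
        -∑ x ∈ X.support, negMulLog (X.weight x) -
          (Module.finrank ℝ E : ℝ) / 2 * log (2 * π * y) := by
    simp only [mul_sub, Finset.sum_sub_distrib, ← Finset.sum_mul, X.sum_weight, one_mul,
      negMulLog, neg_mul, Finset.sum_neg_distrib, neg_neg]
  rw [hweights, Finset.sum_const, Finset.card_product, nsmul_eq_mul, Nat.cast_mul] at hmono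
  linarith

lemma diffEntropy_le (hy : 0 < y) :
    X.diffEntropy y ≤ (Module.finrank ℝ E : ℝ) / 2 * log (2 * π * y) +
      1 / (2 * y) * ∫ u, ‖u‖ ^ 2 * X.density y u := by
  set K := (Module.finrank ℝ E : ℝ) / 2 * log (2 * π * y) with hK
  have hmoment : Integrable fun u => ‖u‖ ^ 2 * X.density y u := by
    simpa only [sub_zero] using X.integrable_norm_sq_mul_density_sub hy 0
  have hbound (u : E) : negMulLog (X.density y u) ≤
      (K - 1) * X.density y u + 1 / (2 * y) * (‖u‖ ^ 2 * X.density y u) + gaussianDensity y u := by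
    have htangent := negMulLog_le_of_pos (X.density_pos hy u) (gaussianDensity_pos hy u)
    rw [log_gaussianDensity hy, neg_div, neg_mul (_ / 2), ← hK] at htangent
    linarith
  have hleft : Integrable fun u =>
      (K - 1) * X.density y u + 1 / (2 * y) * (‖u‖ ^ 2 * X.density y u) :=
    ((X.integrable_density hy).const_mul _).add (hmoment.const_mul _)
  calc X.diffEntropy y
      ≤ ∫ u, ((K - 1) * X.density y u + 1 / (2 * y) * (‖u‖ ^ 2 * X.density y u) +
          gaussianDensity y u) :=
        integral_mono (X.integrable_negMulLog_density hy)
          (hleft.add (integrable_gaussianDensity hy)) hbound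
    _ = K + 1 / (2 * y) * ∫ u, ‖u‖ ^ 2 * X.density y u := by
      rw [integral_add hleft (integrable_gaussianDensity hy),
        integral_add ((X.integrable_density hy).const_mul _) (hmoment.const_mul _),
        integral_const_mul, integral_const_mul, X.integral_density hy, integral_gaussianDensity hy]
      ring

lemma integral_norm_sq_mul_gaussianDensity_sub_le (hy : 0 < y) {x : E} (hx : ‖x‖ ≤ R) :
    ∫ u, ‖u‖ ^ 2 * gaussianDensity y (u - x) ≤
      2 * (∫ u : E, ‖u‖ ^ 2 * gaussianDensity y u) + 2 * R ^ 2 := by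
  have hmoment : Integrable fun u : E => ‖u‖ ^ 2 * gaussianDensity y u := by
    simpa only [sub_zero] using integrable_norm_sq_mul_gaussianDensity_sub (E := E) hy 0
  have hshift : ∫ u, ‖u‖ ^ 2 * gaussianDensity y (u - x) =
      ∫ u, ‖u + x‖ ^ 2 * gaussianDensity y u := by
    simpa only [sub_add_cancel] using
      integral_sub_right_eq_self (fun u => ‖u + x‖ ^ 2 * gaussianDensity y u) x
  rw [hshift, ← integral_const_mul, ← mul_one (2 * R ^ 2), ← integral_gaussianDensity (E := E) hy,
    ← integral_const_mul, ← integral_add (hmoment.const_mul _)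
      ((integrable_gaussianDensity hy).const_mul _)]
  refine integral_mono_of_nonneg
    (.of_forall fun u => mul_nonneg (sq_nonneg _) (gaussianDensity_pos hy _).le)
    ((hmoment.const_mul _).add ((integrable_gaussianDensity hy).const_mul _))
    (.of_forall fun u => ?_)
  have hsq : ‖u + x‖ ^ 2 ≤ 2 * ‖u‖ ^ 2 + 2 * R ^ 2 := by
    rw [← mul_add]
    exact (pow_le_pow_left₀ (norm_nonneg _) ((norm_add_le u x).trans (by gcongr)) 2).trans add_sq_le
  calc ‖u + x‖ ^ 2 * gaussianDensity y u
      ≤ (2 * ‖u‖ ^ 2 + 2 * R ^ 2) * gaussianDensity y u :=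
        mul_le_mul_of_nonneg_right hsq (gaussianDensity_pos hy _).le
    _ = _ := by ring

lemma integral_norm_sq_mul_density_le (hy : 0 < y) (hR : ∀ x ∈ X.support, ‖x‖ ≤ R) :
    ∫ u, ‖u‖ ^ 2 * X.density y u ≤
      2 * (∫ u : E, ‖u‖ ^ 2 * gaussianDensity y u) + 2 * R ^ 2 := by
  simp only [density, Finset.mul_sum, mul_left_comm (‖_‖ ^ 2)]
  rw [integral_finsetSum _ fun x _ =>
    (integrable_norm_sq_mul_gaussianDensity_sub hy x).const_mul _]
  simp only [integral_const_mul]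
  calc ∑ x ∈ X.support, X.weight x * ∫ u, ‖u‖ ^ 2 * gaussianDensity y (u - x)
      ≤ ∑ x ∈ X.support, X.weight x *
          (2 * (∫ u : E, ‖u‖ ^ 2 * gaussianDensity y u) + 2 * R ^ 2) :=
        Finset.sum_le_sum fun x hx => mul_le_mul_of_nonneg_left
          (integral_norm_sq_mul_gaussianDensity_sub_le hy (hR x hx)) (X.weight_pos x hx).le
    _ = _ := by rw [← Finset.sum_mul, X.sum_weight, one_mul]

end EntropyBounds

section Operator

variable {E : Type*} [NormedAddCommGroup E] [InnerProductSpace ℝ E] [FiniteDimensional ℝ E]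
  [MeasurableSpace E] [BorelSpace E] (X : FiniteLaw E) {y : ℝ}

/-- The law `X` as a measure on `E`. -/
noncomputable def measure {E : Type*} [MeasurableSpace E] (X : FiniteLaw E) : Measure E :=
  ∑ x ∈ X.support, ENNReal.ofReal (X.weight x) • Measure.dirac x

instance {E : Type*} [MeasurableSpace E] (X : FiniteLaw E) : IsProbabilityMeasure X.measure := by
  constructor
  simp only [measure, Measure.finsetSum_apply, Measure.smul_apply, measure_univ, smul_eq_mul,
    mul_one]
  rw [← ENNReal.ofReal_sum_of_nonneg fun x hx => (X.weight_pos x hx).le, X.sum_weight,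
    ENNReal.ofReal_one]

lemma integral_measure {E : Type*} [MeasurableSpace E] [MeasurableSingletonClass E]
    (X : FiniteLaw E) (f : E → ℝ) :
    ∫ u, f u ∂X.measure = ∑ x ∈ X.support, X.weight x * f x := by
  rw [measure, integral_finsetSum_measure fun x _ =>
    (integrable_dirac (by simp)).smul_measure ENNReal.ofReal_ne_top]
  refine Finset.sum_congr rfl fun x hx => ?_
  rw [integral_smul_measure, integral_dirac, ENNReal.toReal_ofReal (X.weight_pos x hx).le,
    smul_eq_mul]

lemma convOp_measure_mul_convOp_gaussianMeasure_apply (hy : 0 < y) (φ : E →ᵇ ℝ) (x : E) :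
    (convOp X.measure * convOp (gaussianMeasure y) : BCFOperator E) φ x =
      ∫ u, φ (x + u) * X.density y u := by
  have hterm (v : E) : Integrable fun u => φ (x + u) * (X.weight v * gaussianDensity y (u - v)) :=
    (((integrable_gaussianDensity hy).comp_sub_right v).const_mul _).bdd_mul (c := ‖φ‖)
      (by fun_prop) (.of_forall fun u => φ.norm_coe_le_norm _)
  simp only [density, Finset.mul_sum]
  rw [integral_finsetSum _ fun v _ => hterm v, mul_apply_eq_comp, convOp_apply, X.integral_measure]
  refine Finset.sum_congr rfl fun v _ => ?_
  rw [convOp_apply, integral_gaussianMeasure hy, ← integral_const_mul,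
    ← integral_sub_right_eq_self _ v]
  refine integral_congr_ae (.of_forall fun u => ?_)
  simp only [add_assoc, add_sub_cancel]
  ring

lemma norm_convOp_measure_mul_convOp_dirac_sub_one_le (hy : 0 < y) (z : E) :
    ‖convOp X.measure * convOp (gaussianMeasure y) * (convOp (.dirac z) - 1)‖ ≤
      translationModulus volume (X.density y) z := by
  refine BCFOperator.norm_le_of_forall_apply_le (translationModulus_nonneg _ _ _) fun φ x => ?_
  have hdensity := X.integrable_density hy
  have hbdd {f : E → ℝ} (hf : Integrable f) : Integrable fun u => φ (x + u) * f u :=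
    hf.bdd_mul (c := ‖φ‖) (by fun_prop) (.of_forall fun u => φ.norm_coe_le_norm _)
  have happly : (convOp X.measure * convOp (gaussianMeasure y) * (convOp (.dirac z) - 1) :
      BCFOperator E) φ x = ∫ u, φ (x + u) * (X.density y (u - z) - X.density y u) := by
    simp only [mul_sub]
    rw [integral_sub (hbdd (hdensity.comp_sub_right z)) (hbdd hdensity), mul_one]
    change (convOp X.measure * convOp (gaussianMeasure y) : BCFOperator E)
      (convOp (.dirac z) φ) x - (convOp X.measure * convOp (gaussianMeasure y) :
        BCFOperator E) φ x = _
    rw [X.convOp_measure_mul_convOp_gaussianMeasure_apply hy,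
      X.convOp_measure_mul_convOp_gaussianMeasure_apply hy,
      ← integral_sub_right_eq_self _ z]
    simp only [convOp_dirac_apply, add_assoc, sub_add_cancel]
  rw [happly, mul_comm, translationModulus, ← integral_const_mul]
  refine norm_integral_le_of_norm_le (((hdensity.comp_sub_right z).sub hdensity).abs.const_mul _)
    (.of_forall fun u => ?_)
  rw [norm_mul, norm_eq_abs (_ - _)]
  exact mul_le_mul_of_nonneg_right (φ.norm_coe_le_norm _) (abs_nonneg _)

end Operator
end FiniteLaw

/-! ### Gaussian increments -/

section GaussianIncrement

variable {E : Type*} [NormedAddCommGroup E] [InnerProductSpace ℝ E] [FiniteDimensional ℝ E]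
  [MeasurableSpace E] [BorelSpace E] {v w : ℝ}

/-- The heat semigroup on bounded continuous functions: convolution with the Gaussian of
variance `v`. -/
noncomputable def heatOp (v : ℝ) : BCFOperator E :=
  convOp (gaussianMeasure v)

lemma heatOp_add (hv : 0 ≤ v) (hw : 0 ≤ w) :
    (heatOp (v + w) : BCFOperator E) = heatOp v * heatOp w := by
  simp only [heatOp, ← convOp_conv, gaussianMeasure_conv hv hw]

lemma heatOp_sq_mul (v : ℝ) {c : ℝ} (hc : c ≠ 0) (V : E ≃ₗᵢ[ℝ] E) :
    (heatOp (c ^ 2 * v) : BCFOperator E) = conjOp (scaledIsometry c hc V) (heatOp v) := by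
  simp only [heatOp, ← convOp_map, gaussianMeasure_map_scaledIsometry]

lemma commute_convOp_heatOp (ρ : Measure E) [IsFiniteMeasure ρ] (v : ℝ) :
    Commute (convOp ρ) (heatOp v) :=
  commute_convOp ρ _

/-- The change of a Gaussian smoothing of variance `2 v` under a further Gaussian convolution of
variance `w`. The variance is `2 v` because increments are estimated by splitting the smoothing
into two halves. -/
noncomputable def gaussianIncrement (v w : ℝ) : BCFOperator E :=
  heatOp (2 * v) * (heatOp w - 1)

lemma commute_convOp_gaussianIncrement (ρ : Measure E) [IsFiniteMeasure ρ] (v w : ℝ) :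
    Commute (convOp ρ) (gaussianIncrement v w) :=
  (commute_convOp_heatOp ρ _).mul_right
    ((commute_convOp_heatOp ρ _).sub_right (Commute.one_right _))

lemma gaussianIncrement_sq_mul (v w : ℝ) {c : ℝ} (hc : c ≠ 0) (V : E ≃ₗᵢ[ℝ] E) :
    (gaussianIncrement (c ^ 2 * v) (c ^ 2 * w) : BCFOperator E) =
      conjOp (scaledIsometry c hc V) (gaussianIncrement v w) := by
  rw [gaussianIncrement, gaussianIncrement, mul_left_comm 2, heatOp_sq_mul _ hc V,
    heatOp_sq_mul _ hc V, conjOp_mul, conjOp_sub_one]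

end GaussianIncrement

section HasTranslationBound

variable {E : Type*} [NormedAddCommGroup E] [InnerProductSpace ℝ E] [FiniteDimensional ℝ E]
  [MeasurableSpace E] [BorelSpace E] {v w y Y A B : ℝ} {ν : Measure E}

/-- After Gaussian smoothing of variance `y`, the measure `ν` moves in total variation by at most
`n z` under the translation by `z`, where the mean square of `n` over Gaussian `z` of variance `w`
is at most `2 (w / y) A`. Total variation is encoded as the norm of a convolution operator. -/
def HasTranslationBound (ν : Measure E) [IsFiniteMeasure ν] (y A : ℝ) : Prop :=
  ∃ n : E → ℝ,
    (∀ z, ‖convOp ν * heatOp y * (convOp (.dirac z) - 1)‖ ≤ n z) ∧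
      ∀ w > 0, Integrable (fun z => n z ^ 2) (gaussianMeasure w) ∧
        ∫ z, n z ^ 2 ∂(gaussianMeasure w) ≤ 2 * (w / y) * A

namespace HasTranslationBound

lemma mono [IsFiniteMeasure ν] (hy : 0 ≤ y) (h : HasTranslationBound ν y A) (hAB : A ≤ B) :
    HasTranslationBound ν y B := by
  obtain ⟨n, hn, hint⟩ := h
  refine ⟨n, hn, fun w hw => ⟨(hint w hw).1, (hint w hw).2.trans ?_⟩⟩
  gcongr

lemma conv_left [IsFiniteMeasure ν] (ρ : Measure E) [IsProbabilityMeasure ρ]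
    (h : HasTranslationBound ν y A) : HasTranslationBound (ρ.conv ν) y A := by
  obtain ⟨n, hn, hint⟩ := h
  refine ⟨n, fun z => ?_, hint⟩
  rw [convOp_conv, mul_assoc, mul_assoc, ← mul_assoc (convOp ν)]
  calc _ ≤ ‖convOp ρ‖ * _ := norm_mul_le _ _
    _ ≤ 1 * n z := by gcongr; exacts [norm_convOp_le_one ρ, hn z]
    _ = n z := one_mul _

lemma map_scaledIsometry [IsFiniteMeasure ν] (h : HasTranslationBound ν y A) {c : ℝ} (hc : c ≠ 0)
    (V : E ≃ₗᵢ[ℝ] E) :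
    HasTranslationBound (ν.map (scaledIsometry c hc V)) (c ^ 2 * y) A := by
  obtain ⟨n, hn, hint⟩ := h
  set L := scaledIsometry c hc V
  refine ⟨fun z => n (L.symm z), fun z => ?_, fun w hw => ?_⟩
  · have hz : convOp (.dirac z) = conjOp L (convOp (.dirac (L.symm z))) := by
      simp only [← convOp_map, Measure.map_dirac' L.continuous.measurable, L.apply_symm_apply]
    rw [hz, convOp_map, heatOp_sq_mul y hc V, ← conjOp_sub_one, ← conjOp_mul,
      ← conjOp_mul]
    exact (norm_conjOp_le _ _).trans (hn _)
  · have hw' : (gaussianMeasure w : Measure E) = (gaussianMeasure (w / c ^ 2)).map L := by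
      rw [gaussianMeasure_map_scaledIsometry, mul_div_cancel₀ _ (pow_ne_zero 2 hc)]
    have hL : MeasurableEmbedding L := L.toHomeomorph.measurableEmbedding
    obtain ⟨hi, hle⟩ := hint (w / c ^ 2) (by positivity)
    rw [hw', hL.integrable_map_iff, hL.integral_map]
    simp only [Function.comp_def, L.symm_apply_apply]
    exact ⟨hi, hle.trans_eq (by rw [div_div])⟩

lemma norm_convOp_conv_mul_gaussianIncrement_le {ν₁ ν₂ : Measure E} [IsProbabilityMeasure ν₁]
    [IsProbabilityMeasure ν₂] (hy : 0 ≤ y) (h₁ : HasTranslationBound ν₁ y A)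
    (h₂ : HasTranslationBound ν₂ y A) (hw : 0 < w) :
    ‖convOp (ν₁.conv ν₂) * gaussianIncrement y w‖ ≤ A * (w / y) := by
  obtain ⟨n₁, hn₁, hint₁⟩ := h₁
  obtain ⟨n₂, hn₂, hint₂⟩ := h₂
  obtain ⟨hi₁, hle₁⟩ := hint₁ w hw
  obtain ⟨hi₂, hle₂⟩ := hint₂ w hw
  have hsplit : convOp (ν₁.conv ν₂) * gaussianIncrement y w =
      convOp (ν₁.conv (gaussianMeasure y)) * convOp (ν₂.conv (gaussianMeasure y)) *
        (heatOp w - 1) := by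
    rw [gaussianIncrement, two_mul, heatOp_add hy hy, convOp_conv, convOp_conv, convOp_conv]
    simp only [← mul_assoc]
    rw [mul_assoc (convOp ν₁), (commute_convOp_heatOp ν₂ y).eq, ← mul_assoc, heatOp]
  rw [hsplit]
  refine (norm_convOp_mul_convOp_mul_sub_one_le _ _ _ (fun z => ?_) (fun z => ?_) hi₁ hi₂).trans ?_
  · rw [convOp_conv]
    exact hn₁ z
  · rw [convOp_conv]
    exact hn₂ z
  · linarith

end HasTranslationBound

lemma FiniteLaw.hasTranslationBound_measure (X : FiniteLaw E) (hy : 0 < y) (hyY : y < Y) :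
    HasTranslationBound X.measure Y ((X.diffEntropy Y - X.diffEntropy y) / (1 - y / Y)) := by
  have hY := hy.trans hyY
  refine ⟨_, X.norm_convOp_measure_mul_convOp_dirac_sub_one_le hY, fun w hw =>
    ⟨integrable_translationModulus_sq (X.continuous_density Y).measurable
      (X.integrable_density hY) _, (X.gaussianSqModulus_density_le_div hy hyY hw).trans_eq ?_⟩⟩
  have hsub : Y - y = Y * (1 - y / Y) := by field_simp
  rw [hsub, ← div_div, div_right_comm]
  ring

end HasTranslationBound

section TrivialBound

variable {E : Type*} [NormedAddCommGroup E] [InnerProductSpace ℝ E] [FiniteDimensional ℝ E]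
  [MeasurableSpace E] [BorelSpace E]

lemma FiniteLaw.exists_measure_eq_dirac {E : Type*} [MeasurableSpace E] (x : E) :
    ∃ X : FiniteLaw E, X.measure = .dirac x :=
  ⟨⟨{x}, fun _ => 1, fun _ _ => one_pos, by simp⟩, by simp [FiniteLaw.measure]⟩

/-- Smoothing alone already bounds the increments; by scaling it suffices to take `v = 1`. -/
lemma exists_norm_gaussianIncrement_le (E : Type*) [NormedAddCommGroup E] [InnerProductSpace ℝ E]
    [FiniteDimensional ℝ E] [MeasurableSpace E] [BorelSpace E] :
    ∃ C > 0, ∀ v > 0, ∀ w > 0, ‖(gaussianIncrement v w : BCFOperator E)‖ ≤ C * (w / v) := by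
  obtain ⟨X, hX⟩ := FiniteLaw.exists_measure_eq_dirac (0 : E)
  have hunit := X.hasTranslationBound_measure (y := 1 / 2) (Y := 1) (by norm_num) (by norm_num)
  set D := (X.diffEntropy 1 - X.diffEntropy (1 / 2)) / (1 - 1 / 2 / 1)
  have hbase : ∀ w > 0, ‖(gaussianIncrement 1 w : BCFOperator E)‖ ≤ D * w := fun w hw => by
    have h := hunit.norm_convOp_conv_mul_gaussianIncrement_le zero_le_one hunit hw
    simpa only [convOp_conv, hX, convOp_dirac_zero, one_mul, div_one] using h
  refine ⟨|D| + 1, by positivity, fun v hv w hw => ?_⟩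
  have hs : √v ≠ 0 := (sqrt_pos.2 hv).ne'
  have hscale : (gaussianIncrement v w : BCFOperator E) =
      conjOp (scaledIsometry √v hs (.refl ℝ E)) (gaussianIncrement 1 (w / v)) := by
    rw [← gaussianIncrement_sq_mul, sq_sqrt hv.le, mul_one, mul_div_cancel₀ _ hv.ne']
  have hwv : 0 < w / v := div_pos hw hv
  calc ‖(gaussianIncrement v w : BCFOperator E)‖
      ≤ ‖(gaussianIncrement 1 (w / v) : BCFOperator E)‖ := hscale ▸ norm_conjOp_le _ _
    _ ≤ D * (w / v) := hbase _ hwv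
    _ ≤ (|D| + 1) * (w / v) := by gcongr; linarith [le_abs_self D]

end TrivialBound

/-! ### Iterated telescoping along the heat semigroup -/

section IteratedTelescoping

/-- A Cauchy product of series in which only the first factor depends on the summation index. -/
lemma tsum_mul_tsum_add_eq_tsum_antidiagonal (a f : ℕ → ENNReal) :
    ∑' p, a p * ∑' q, f (p + q) =
      ∑' k, (∑ pq ∈ Finset.HasAntidiagonal.antidiagonal k, a pq.1) * f k := by
  simp_rw [← ENNReal.tsum_mul_left]
  rw [← ENNReal.tsum_prod (f := fun p q => a p * f (p + q)),
    ← Finset.HasAntidiagonal.sigmaAntidiagonalEquivProd.tsum_eq, ENNReal.tsum_sigma']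
  refine tsum_congr fun k => ?_
  rw [tsum_fintype, Finset.sum_mul, ← Finset.sum_coe_sort (Finset.HasAntidiagonal.antidiagonal k)]
  refine Finset.sum_congr rfl fun x _ => ?_
  have hx : x.1.1 + x.1.2 = k := Finset.HasAntidiagonal.mem_antidiagonal.1 x.2
  simp [Finset.HasAntidiagonal.sigmaAntidiagonalEquivProd_apply, hx]

lemma sum_antidiagonal_choose_fst_add (s n : ℕ) :
    ∑ pq ∈ Finset.HasAntidiagonal.antidiagonal n, (pq.1 + s).choose s =
      (n + s + 1).choose (s + 1) := by
  rw [Finset.Nat.sum_antidiagonal_eq_sum_range_succ fun p _ => (p + s).choose s]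
  exact Nat.sum_range_add_choose n s

lemma le_tsum_choose_mul_of_forall_le_tsum {b : ℕ → ℕ → ENNReal}
    (hb : ∀ j n, b j n ≤ ∑' p, b (j + 1) (n + p)) (s n : ℕ) :
    b 0 n ≤ ∑' p, ((p + s).choose s : ENNReal) * b (s + 1) (n + p) := by
  induction s with
  | zero => simpa only [Nat.choose_zero_right, Nat.cast_one, one_mul] using hb 0 n
  | succ s ih =>
    calc b 0 n ≤ ∑' p, ((p + s).choose s : ENNReal) * b (s + 1) (n + p) := ih
      _ ≤ ∑' p, ((p + s).choose s : ENNReal) * ∑' q, b (s + 2) (n + (p + q)) :=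
          ENNReal.tsum_le_tsum fun p => by
            gcongr
            simpa only [add_assoc] using hb (s + 1) (n + p)
      _ = ∑' p, ((p + (s + 1)).choose (s + 1) : ENNReal) * b (s + 2) (n + p) := by
          rw [tsum_mul_tsum_add_eq_tsum_antidiagonal (fun p => ((p + s).choose s : ENNReal))
            fun k => b (s + 2) (n + k)]
          simp only [← Nat.cast_sum, sum_antidiagonal_choose_fst_add, add_assoc]

lemma choose_div_pow_mul_rpow_half_le (s p : ℕ) :
    ((p + s).choose s : ℝ) / ((s + 2 + p : ℕ) : ℝ) ^ (s + 2) * ((s + 2 + p : ℕ) : ℝ) ^ (1 / 2 : ℝ) ≤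
      ((s + 2 + p : ℕ) : ℝ) ^ (-(3 / 2) : ℝ) / s.factorial := by
  set j := s + 2 + p with hj
  have hj0 : (0 : ℝ) < j := by rw [hj]; positivity
  have hchoose : ((p + s).choose s : ℝ) ≤ (j : ℝ) ^ s / s.factorial := by
    refine (Nat.choose_le_pow_div s (p + s)).trans ?_
    gcongr
    omega
  calc ((p + s).choose s : ℝ) / (j : ℝ) ^ (s + 2) * (j : ℝ) ^ (1 / 2 : ℝ)
      ≤ (j : ℝ) ^ s / s.factorial / (j : ℝ) ^ (s + 2) * (j : ℝ) ^ (1 / 2 : ℝ) := by gcongr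
    _ = (j : ℝ) ^ (1 / 2 : ℝ) / (j : ℝ) ^ 2 / s.factorial := by rw [pow_add]; field_simp
    _ = (j : ℝ) ^ (-(3 / 2) : ℝ) / s.factorial := by
        rw [← rpow_natCast (j : ℝ) 2, ← rpow_sub hj0]
        norm_num

/-- The value `ζ(3/2)`; the term at `j = 0` vanishes because `0 ^ (-3/2) = 0` in `ℝ`. -/
noncomputable def zetaThreeHalves : ℝ := ∑' j : ℕ, (j : ℝ) ^ (-(3 / 2) : ℝ)

lemma zetaThreeHalves_nonneg : 0 ≤ zetaThreeHalves :=
  tsum_nonneg fun j => rpow_nonneg j.cast_nonneg _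

lemma tsum_ofReal_mul_rpow_le {c : ℝ} (hc : 0 ≤ c) (n : ℕ) :
    ∑' p : ℕ, ENNReal.ofReal (c * ((n + p : ℕ) : ℝ) ^ (-(3 / 2) : ℝ)) ≤
      ENNReal.ofReal (c * zetaThreeHalves) := by
  refine (ENNReal.tsum_comp_le_tsum_of_injective (add_right_injective n)
    fun j : ℕ => ENNReal.ofReal (c * (j : ℝ) ^ (-(3 / 2) : ℝ))).trans_eq ?_
  rw [zetaThreeHalves, ← tsum_mul_left, ENNReal.ofReal_tsum_of_nonneg (fun j => by positivity)
    ((Real.summable_nat_rpow.2 (by norm_num)).mul_left c)]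

variable {R : Type*} [NormedRing R]

lemma enorm_le_tsum_enorm_mul_pow_mul_one_sub {a x : R}
    (h : Tendsto (fun N => a * x ^ N) atTop (𝓝 0)) :
    ‖a‖ₑ ≤ ∑' p, ‖a * (x ^ p * (1 - x))‖ₑ := by
  have hle : ∀ N, ‖a‖ₑ ≤ ‖a * x ^ N‖ₑ + ∑' p, ‖a * (x ^ p * (1 - x))‖ₑ := fun N => by
    have hgeom : a = a * x ^ N + ∑ p ∈ Finset.range N, a * (x ^ p * (1 - x)) := by
      rw [← Finset.mul_sum, ← Finset.sum_mul, geom_sum_mul_neg, mul_sub, mul_one,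
        add_sub_cancel]
    calc ‖a‖ₑ ≤ ‖a * x ^ N‖ₑ + ‖∑ p ∈ Finset.range N, a * (x ^ p * (1 - x))‖ₑ := by
          conv_lhs => rw [hgeom]
          exact enorm_add_le _ _
      _ ≤ _ := by
          gcongr
          exact (enorm_sum_le _ _).trans (ENNReal.sum_le_tsum _)
  have hlim := h.enorm.add_const (∑' p, ‖a * (x ^ p * (1 - x))‖ₑ)
  rw [enorm_zero, zero_add] at hlim
  exact ge_of_tendsto' hlim hle

lemma enorm_mul_pow_mul_one_sub_pow_le {T x : R}
    (h0 : Tendsto (fun N => T * (x ^ N * (1 - x))) atTop (𝓝 0)) (j n : ℕ) :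
    ‖T * (x ^ n * (1 - x) ^ (j + 1))‖ₑ ≤
      ∑' p, ‖T * (x ^ (n + p) * (1 - x) ^ (j + 1 + 1))‖ₑ := by
  have hx : ∀ p, Commute ((1 - x) ^ (j + 1)) (x ^ p) := fun p =>
    ((Commute.one_left x).sub_left (Commute.refl x)).pow_pow _ _
  have hterm : ∀ p, T * (x ^ n * (1 - x) ^ (j + 1)) * x ^ p =
      T * (x ^ (n + p) * (1 - x) ^ (j + 1)) := fun p => by
    rw [mul_assoc, mul_assoc (x ^ n), (hx p).eq, ← mul_assoc (x ^ n), ← pow_add]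
  have hlim : Tendsto (fun N => T * (x ^ n * (1 - x) ^ (j + 1)) * x ^ N) atTop (𝓝 0) := by
    rw [← zero_mul ((1 - x) ^ j)]
    refine (((tendsto_add_atTop_iff_nat n).2 h0).mul_const _).congr fun N => ?_
    rw [hterm, add_comm N, pow_succ', mul_assoc, mul_assoc]
  refine (enorm_le_tsum_enorm_mul_pow_mul_one_sub hlim).trans_eq (tsum_congr fun p => ?_)
  rw [← mul_assoc, hterm, pow_succ _ (j + 1), mul_assoc, mul_assoc]

lemma norm_mul_pow_mul_one_sub_le {T x : R} {B : ℝ} (hB : 0 ≤ B) (s : ℕ)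
    (h0 : Tendsto (fun N => T * (x ^ N * (1 - x))) atTop (𝓝 0))
    (hb : ∀ n : ℕ, 1 ≤ n →
      ‖T * (x ^ n * (1 - x) ^ (s + 2))‖ ≤ B / (n : ℝ) ^ (s + 2) * (n : ℝ) ^ (1 / 2 : ℝ)) :
    ‖T * (x ^ (s + 2) * (1 - x))‖ ≤ B / s.factorial * zetaThreeHalves := by
  have hB' : 0 ≤ B / s.factorial := by positivity
  refine (ENNReal.ofReal_le_ofReal_iff (mul_nonneg hB' zetaThreeHalves_nonneg)).1 ?_
  calc ENNReal.ofReal ‖T * (x ^ (s + 2) * (1 - x))‖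
      = ‖T * (x ^ (s + 2) * (1 - x) ^ (0 + 1))‖ₑ := by rw [zero_add, pow_one, ofReal_norm]
    _ ≤ ∑' p, ((p + s).choose s : ENNReal) * ‖T * (x ^ (s + 2 + p) * (1 - x) ^ (s + 2))‖ₑ :=
        le_tsum_choose_mul_of_forall_le_tsum (enorm_mul_pow_mul_one_sub_pow_le h0) s (s + 2)
    _ ≤ ∑' p : ℕ, ENNReal.ofReal (B / s.factorial * ((s + 2 + p : ℕ) : ℝ) ^ (-(3 / 2) : ℝ)) := by
        refine ENNReal.tsum_le_tsum fun p => ?_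
        rw [← ofReal_norm, ← ENNReal.ofReal_natCast, ← ENNReal.ofReal_mul (Nat.cast_nonneg _)]
        refine ENNReal.ofReal_le_ofReal ((mul_le_mul_of_nonneg_left (hb _ (by omega))
          (Nat.cast_nonneg _)).trans ?_)
        have hchoose := mul_le_mul_of_nonneg_left (choose_div_pow_mul_rpow_half_le s p) hB
        convert hchoose using 1 <;> ring
    _ ≤ ENNReal.ofReal (B / s.factorial * zetaThreeHalves) := tsum_ofReal_mul_rpow_le hB' _

end IteratedTelescoping

section HeatSemigroup

variable {E : Type*} [NormedAddCommGroup E] [InnerProductSpace ℝ E] [FiniteDimensional ℝ E]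
  [MeasurableSpace E] [BorelSpace E] {v w Y A C : ℝ} {T : BCFOperator E}

lemma heatOp_zero : (heatOp 0 : BCFOperator E) = 1 := by
  have hdirac : (gaussianMeasure 0 : Measure E) = .dirac 0 := by simp [gaussianMeasure]
  simp only [heatOp, hdirac, convOp_dirac_zero]

lemma norm_heatOp_le_one (w : ℝ) : ‖(heatOp w : BCFOperator E)‖ ≤ 1 :=
  norm_convOp_le_one _

lemma heatOp_pow (hw : 0 ≤ w) (n : ℕ) : (heatOp w : BCFOperator E) ^ n = heatOp (n * w) := by
  induction n with
  | zero => rw [pow_zero, Nat.cast_zero, zero_mul, heatOp_zero]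
  | succ n ih =>
    rw [pow_succ, ih, ← heatOp_add (by positivity) hw]
    push_cast
    ring_nf

lemma norm_mul_gaussianIncrement_pow (hv : 0 ≤ v) (hw : 0 ≤ w) {m n : ℕ}
    (h : (m : ℝ) * (2 * v) = n * w) (T : BCFOperator E) :
    ‖T * gaussianIncrement v w ^ m‖ = ‖T * (heatOp w ^ n * (1 - heatOp w) ^ m)‖ := by
  have hcomm : Commute (heatOp (2 * v) : BCFOperator E) (heatOp w - 1) :=
    (commute_convOp_heatOp _ _).sub_right (Commute.one_right _)
  rw [gaussianIncrement, hcomm.mul_pow, heatOp_pow (by positivity), heatOp_pow hw, h,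
    ← neg_sub (1 : BCFOperator E), neg_pow]
  rcases neg_one_pow_eq_or (BCFOperator E) m with hm | hm
  · rw [hm, one_mul]
  · rw [hm, neg_one_mul, mul_neg, mul_neg, norm_neg]

lemma tendsto_mul_heatOp_pow_mul_one_sub (hT : ‖T‖ ≤ 1) (hw : 0 < w)
    (hC : ∀ v > 0, ‖(gaussianIncrement v w : BCFOperator E)‖ ≤ C * (w / v)) :
    Tendsto (fun N => T * (heatOp w ^ N * (1 - heatOp w))) atTop (𝓝 0) := by
  refine squeeze_zero_norm' ?_ (tendsto_const_div_atTop_nhds_zero_nat (2 * C))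
  filter_upwards [eventually_ge_atTop 1] with N hN
  have _hN0 : (0 : ℝ) < N := by exact_mod_cast hN
  have hpow := norm_mul_gaussianIncrement_pow (E := E) (v := N * w / 2) (m := 1) (n := N)
    (by positivity) hw.le (by push_cast; ring) T
  rw [pow_one, pow_one] at hpow
  calc ‖T * (heatOp w ^ N * (1 - heatOp w))‖
      = ‖T * gaussianIncrement (N * w / 2) w‖ := hpow.symm
    _ ≤ ‖(gaussianIncrement (N * w / 2) w : BCFOperator E)‖ :=
        (norm_mul_le _ _).trans (mul_le_of_le_one_left (norm_nonneg _) hT)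
    _ ≤ C * (w / (N * w / 2)) := hC _ (by positivity)
    _ = 2 * C / N := by field_simp

lemma one_le_rpow_quarter_mul_rpow_half {m n : ℕ} (hY : 0 < Y) (hm : 1 ≤ m)
    (h : √Y < n * (Y / m) / (2 * m)) : 1 ≤ Y ^ (1 / 4 : ℝ) * (n : ℝ) ^ (1 / 2 : ℝ) := by
  have hm1 : (1 : ℝ) ≤ m := by exact_mod_cast hm
  have hm0 : (0 : ℝ) < m := by linarith
  have hsY : 0 < √Y := sqrt_pos.2 hY
  have hrw : n * (Y / m) / (2 * m) = √Y * n / (2 * m ^ 2) * √Y := by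
    nth_rw 1 [← mul_self_sqrt hY.le]
    field_simp
  have hone : 1 < √Y * n / (2 * m ^ 2) := by
    rw [hrw] at h
    exact (lt_mul_iff_one_lt_left hsY).1 h
  rw [one_lt_div (by positivity)] at hone
  have hquarter : Y ^ (1 / 4 : ℝ) = √Y ^ (1 / 2 : ℝ) := by
    rw [sqrt_eq_rpow, ← rpow_mul hY.le]
    norm_num
  rw [hquarter, ← mul_rpow hsY.le n.cast_nonneg]
  exact one_le_rpow (by nlinarith) (by norm_num)

lemma norm_mul_heatOp_pow_mul_one_sub_pow_le (hT : ‖T‖ ≤ 1) (hA : 0 ≤ A) (hC0 : 0 ≤ C)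
    (hY : 0 < Y) {m n : ℕ} (hm : 1 ≤ m) (hn : 1 ≤ n)
    (hA' : ∀ v > 0, v ≤ √Y → ∀ w > 0, ‖T * gaussianIncrement v w ^ m‖ ≤ (A * (w / v)) ^ m)
    (hC : ∀ v > 0, ∀ w > 0, ‖(gaussianIncrement v w : BCFOperator E)‖ ≤ C * (w / v)) :
    ‖T * (heatOp (Y / m) ^ n * (1 - heatOp (Y / m)) ^ m)‖ ≤
      (2 * m) ^ m * (A ^ m + C ^ m * Y ^ (1 / 4 : ℝ)) / (n : ℝ) ^ m * (n : ℝ) ^ (1 / 2 : ℝ) := by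
  have _hm0 : (0 : ℝ) < m := by exact_mod_cast hm
  have hn1 : (1 : ℝ) ≤ n := by exact_mod_cast hn
  have _hn0 : (0 : ℝ) < n := by linarith
  set v := n * (Y / m) / (2 * m) with hv
  have hv0 : 0 < v := by positivity
  have hw0 : 0 < Y / m := by positivity
  have hwv : ∀ D : ℝ, (D * (Y / m / v)) ^ m = (2 * m) ^ m * D ^ m / (n : ℝ) ^ m := fun D => by
    have hratio : Y / m / v = 2 * m / n := by rw [hv]; field_simp
    rw [hratio, mul_pow, div_pow]
    ring
  rw [← norm_mul_gaussianIncrement_pow hv0.le hw0.le (by rw [hv]; field_simp) T]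
  by_cases hvY : v ≤ √Y
  · have hn2 : 1 ≤ (n : ℝ) ^ (1 / 2 : ℝ) := one_le_rpow hn1 (by norm_num)
    calc ‖T * gaussianIncrement v (Y / m) ^ m‖
        ≤ (2 * m) ^ m * (A ^ m + 0) / (n : ℝ) ^ m * 1 := by
          rw [add_zero, mul_one, ← hwv]
          exact hA' v hv0 hvY _ hw0
      _ ≤ _ := by gcongr; positivity
  · have hYn := one_le_rpow_quarter_mul_rpow_half hY hm (not_le.1 hvY)
    calc ‖T * gaussianIncrement v (Y / m) ^ m‖
        ≤ ‖(gaussianIncrement v (Y / m) : BCFOperator E)‖ ^ m :=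
          ((norm_mul_le _ _).trans (mul_le_of_le_one_left (norm_nonneg _) hT)).trans
            (norm_pow_le' _ hm)
      _ ≤ (2 * m) ^ m * C ^ m / (n : ℝ) ^ m * 1 := by
          rw [mul_one, ← hwv]
          gcongr
          exact hC v hv0 _ hw0
      _ ≤ (2 * m) ^ m * C ^ m / (n : ℝ) ^ m * (Y ^ (1 / 4 : ℝ) * (n : ℝ) ^ (1 / 2 : ℝ)) := by gcongr
      _ = (2 * m) ^ m * (0 + C ^ m * Y ^ (1 / 4 : ℝ)) / (n : ℝ) ^ m * (n : ℝ) ^ (1 / 2 : ℝ) := by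
          ring
      _ ≤ _ := by gcongr; positivity

lemma add_two_pow_div_factorial_le (s : ℕ) :
    ((s + 2 : ℕ) : ℝ) ^ (s + 2) / s.factorial ≤ ((s + 2 : ℕ) : ℝ) ^ 2 * exp 1 ^ (s + 2) := by
  have hexp := pow_div_factorial_le_exp ((s + 2 : ℕ) : ℝ) (Nat.cast_nonneg _) (s + 2)
  have hfact : ((s + 2).factorial : ℝ) ≤ ((s + 2 : ℕ) : ℝ) ^ 2 * s.factorial := by
    have : (s + 2).factorial ≤ (s + 2) ^ 2 * s.factorial := by
      rw [Nat.factorial_succ, Nat.factorial_succ, pow_two, ← mul_assoc]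
      gcongr
      omega
    exact_mod_cast this
  rw [div_le_iff₀ (by positivity)] at hexp ⊢
  rw [← exp_nat_mul, mul_one]
  calc _ ≤ exp ((s + 2 : ℕ) : ℝ) * (s + 2).factorial := hexp
    _ ≤ exp ((s + 2 : ℕ) : ℝ) * (((s + 2 : ℕ) : ℝ) ^ 2 * s.factorial) := by gcongr
    _ = _ := by ring

/-- With `x = heatOp (Y / m)` the difference is `x ^ m * (1 - x ^ m)`, whose factor `1 - x` is
expanded into powers of `1 - x` of order `m` by iterated telescoping. -/
lemma norm_mul_heatOp_sub_heatOp_two_mul_le (hT : ‖T‖ ≤ 1) (hA : 0 ≤ A) (hC0 : 0 ≤ C)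
    (hY : 0 < Y) {s m : ℕ} (hm : m = s + 2)
    (hA' : ∀ v > 0, v ≤ √Y → ∀ w > 0, ‖T * gaussianIncrement v w ^ m‖ ≤ (A * (w / v)) ^ m)
    (hC : ∀ v > 0, ∀ w > 0, ‖(gaussianIncrement v w : BCFOperator E)‖ ≤ C * (w / v)) :
    ‖T * (heatOp Y - heatOp (2 * Y))‖ ≤ zetaThreeHalves * (m : ℝ) ^ 3 *
      ((2 * exp 1 * A) ^ m + (2 * exp 1 * C) ^ m * Y ^ (1 / 4 : ℝ)) := by
  have hm0 : (0 : ℝ) < m := by rw [hm]; positivity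
  have hz := zetaThreeHalves_nonneg
  set x : BCFOperator E := heatOp (Y / m) with hx
  set D := A ^ m + C ^ m * Y ^ (1 / 4 : ℝ) with hD
  have _hD0 : 0 ≤ D := by positivity
  have hw : 0 < Y / m := by positivity
  have hxm : ∀ k : ℕ, heatOp (k * Y) = (x ^ m) ^ k := fun k => by
    rw [← pow_mul, hx, heatOp_pow hw.le]
    congr 1
    push_cast
    field_simp
  have hfac : T * (heatOp Y - heatOp (2 * Y)) =
      T * (x ^ m * (1 - x)) * ∑ i ∈ Finset.range m, x ^ i := by
    rw [mul_assoc, mul_assoc (x ^ m), mul_neg_geom_sum, mul_sub (x ^ m), mul_one, ← sq]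
    simpa only [Nat.cast_one, one_mul, pow_one, Nat.cast_two] using
      congrArg₂ (fun a b => T * (a - b)) (hxm 1) (hxm 2)
  have hsum : ‖∑ i ∈ Finset.range m, x ^ i‖ ≤ m := by
    refine (norm_sum_le_of_le _ (f := fun i => x ^ i) (n := fun _ => 1) fun i _ => ?_).trans_eq
      (by simp)
    rw [hx, heatOp_pow hw.le]
    exact norm_heatOp_le_one _
  have hone_sub : ‖T * (x ^ m * (1 - x))‖ ≤
      (2 * m) ^ m * D / s.factorial * zetaThreeHalves := by
    have htelescope := norm_mul_pow_mul_one_sub_le (T := T) (x := x) (B := (2 * m) ^ m * D)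
      (by positivity) s (tendsto_mul_heatOp_pow_mul_one_sub hT hw fun v hv => hC v hv _ hw)
      fun n hn => hm ▸ norm_mul_heatOp_pow_mul_one_sub_pow_le hT hA hC0 hY (by omega) hn hA' hC
    rwa [← hm] at htelescope
  calc ‖T * (heatOp Y - heatOp (2 * Y))‖
      ≤ ((2 * m) ^ m * D / s.factorial * zetaThreeHalves) * m := by
        rw [hfac]
        exact (norm_mul_le _ _).trans (by gcongr)
    _ = zetaThreeHalves * m * ((m : ℝ) ^ m / s.factorial * (2 ^ m * D)) := by rw [mul_pow]; ring
    _ ≤ zetaThreeHalves * m * ((m : ℝ) ^ 2 * exp 1 ^ m * (2 ^ m * D)) := by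
        gcongr
        exact hm ▸ add_two_pow_div_factorial_le s
    _ = _ := by rw [hD]; simp only [mul_pow]; ring

end HeatSemigroup

/-! ### Absolute continuity from decay of smoothed increments -/

lemma measureReal_le_add_of_forall_integral_le {Ω : Type*} [MeasurableSpace Ω]
    [PseudoEMetricSpace Ω] [OpensMeasurableSpace Ω] {μ ν : Measure Ω} [IsFiniteMeasure μ]
    [IsFiniteMeasure ν] {ε : ℝ} (h : ∀ φ : Ω →ᵇ ℝ, ‖φ‖ ≤ 1 → ∫ x, φ x ∂μ ≤ ∫ x, φ x ∂ν + ε)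
    {K : Set Ω} (hK : IsClosed K) : μ.real K ≤ ν.real K + ε := by
  have hδ : ∀ n : ℕ, (0 : ℝ) < 1 / (n + 1) := fun n => by positivity
  have hlim := tendsto_one_div_add_atTop_nhds_zero_nat (𝕜 := ℝ)
  refine le_of_tendsto_of_tendsto'
    (tendsto_integral_thickenedIndicator_of_isClosed μ hK hδ hlim)
    ((tendsto_integral_thickenedIndicator_of_isClosed ν hK hδ hlim).add_const ε) fun n => ?_
  exact h (BoundedContinuousFunction.ofNormedAddCommGroup
      (fun x => (thickenedIndicator (hδ n) K x : ℝ)) (by fun_prop) 1 fun x => by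
        simpa using thickenedIndicator_le_one (hδ n) K x)
    (BoundedContinuousFunction.norm_ofNormedAddCommGroup_le _ zero_le_one _)

section HeatSmoothing

variable {E : Type*} [NormedAddCommGroup E] [InnerProductSpace ℝ E] [FiniteDimensional ℝ E]
  [MeasurableSpace E] [BorelSpace E] (μ : Measure E)

lemma conv_gaussianMeasure_absolutelyContinuous [SFinite μ] {v : ℝ} (hv : 0 < v) :
    μ.conv (gaussianMeasure v) ≪ volume := by
  rw [gaussianMeasure_eq_withDensity hv]
  have := isProbabilityMeasure_withDensity_gaussianDensity (E := E) hv
  exact Measure.conv_absolutelyContinuous (withDensity_absolutelyContinuous _ _)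

variable [IsFiniteMeasure μ]

lemma convOp_heatOp_apply_zero (v : ℝ) (φ : E →ᵇ ℝ) :
    convOp μ (heatOp v φ) 0 = ∫ x, φ x ∂(μ.conv (gaussianMeasure v)) := by
  have hconv := congrArg (fun A : BCFOperator E => A φ 0) (convOp_conv μ (gaussianMeasure v))
  simp only [convOp_apply _ φ, zero_add] at hconv
  exact hconv.symm

lemma tendsto_integral_conv_gaussianMeasure (φ : E →ᵇ ℝ) :
    Tendsto (fun v => ∫ x, φ x ∂(μ.conv (gaussianMeasure v))) (𝓝 0) (𝓝 (∫ x, φ x ∂μ)) := by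
  have hheat : ∀ v, ∫ x, φ x ∂(μ.conv (gaussianMeasure v)) = ∫ x, heatOp v φ x ∂μ := fun v => by
    rw [← convOp_heatOp_apply_zero, convOp_apply]
    simp only [zero_add]
  simp only [hheat]
  refine tendsto_integral_filter_of_dominated_convergence (fun _ => ‖φ‖)
    (.of_forall fun v => (heatOp v φ).continuous.aestronglyMeasurable)
    (.of_forall fun v => .of_forall fun x => ?_) (integrable_const _)
    (.of_forall fun x => tendsto_convOp_gaussianMeasure_apply φ x)
  exact (BCFOperator.norm_apply_le _ φ x).trans
    (mul_le_of_le_one_left (norm_nonneg _) (norm_heatOp_le_one v))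

lemma integral_le_integral_conv_gaussianMeasure_add {y : ℕ → ℝ} (hlim : Tendsto y atTop (𝓝 0))
    {ε : ℝ} {n : ℕ}
    (h : ∀ k ≥ n, ‖convOp μ * heatOp (y k) - convOp μ * heatOp (y n)‖ ≤ ε) {φ : E →ᵇ ℝ}
    (hφ : ‖φ‖ ≤ 1) :
    ∫ x, φ x ∂μ ≤ ∫ x, φ x ∂(μ.conv (gaussianMeasure (y n))) + ε := by
  refine le_of_tendsto ((tendsto_integral_conv_gaussianMeasure μ φ).comp hlim) ?_
  filter_upwards [eventually_ge_atTop n] with k hk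
  have hdiff := (BCFOperator.norm_apply_le
    (convOp μ * heatOp (y k) - convOp μ * heatOp (y n)) φ 0).trans
    ((mul_le_of_le_one_right (norm_nonneg _) hφ).trans (h k hk))
  change ‖convOp μ (heatOp (y k) φ) 0 - convOp μ (heatOp (y n) φ) 0‖ ≤ ε at hdiff
  rw [convOp_heatOp_apply_zero, convOp_heatOp_apply_zero] at hdiff
  exact sub_le_iff_le_add'.1 (abs_sub_le_iff.1 hdiff).1

lemma absolutelyContinuous_of_cauchySeq_convOp_mul_heatOp {y : ℕ → ℝ} (hy : ∀ n, 0 < y n)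
    (hlim : Tendsto y atTop (𝓝 0)) (hc : CauchySeq fun n => convOp μ * heatOp (y n)) :
    μ ≪ volume := by
  refine Measure.AbsolutelyContinuous.mk fun s hs h0 => ?_
  simp only [hs.measure_eq_iSup_isClosed_of_ne_top (measure_ne_top μ s), ENNReal.iSup_eq_zero]
  intro K hKs hK
  refine (measureReal_eq_zero_iff (measure_ne_top μ K)).1
    (le_antisymm (le_of_forall_pos_le_add fun ε hε => ?_) measureReal_nonneg)
  obtain ⟨n, hn⟩ := Metric.cauchySeq_iff'.1 hc ε hε
  have hnull : (μ.conv (gaussianMeasure (y n))).real K = 0 := (measureReal_eq_zero_iff).2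
    (conv_gaussianMeasure_absolutelyContinuous μ (hy n) (measure_mono_null hKs h0))
  rw [← hnull]
  exact measureReal_le_add_of_forall_integral_le (fun φ hφ =>
    integral_le_integral_conv_gaussianMeasure_add μ hlim
      (fun k hk => (dist_eq_norm (convOp μ * heatOp (y k)) _) ▸ (hn k hk).le) hφ) hK

end HeatSmoothing

lemma cauchySeq_comp_of_forall_dist_succ_le {α : Type*} [PseudoMetricSpace α] {G : ℕ → α}
    {N : ℕ → ℕ} (hN : Monotone N) {f : ℕ → ℝ} (hf : ∀ s, 0 ≤ f s)
    (hstep : ∀ s i, N s ≤ i → dist (G i) (G (i + 1)) ≤ f s)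
    (hsum : Summable fun s => (N (s + 1) : ℝ) * f s) : CauchySeq (G ∘ N) := by
  refine cauchySeq_of_dist_le_of_summable _ (fun s => ?_) hsum
  refine (dist_le_Ico_sum_of_dist_le (hN s.le_succ) (d := fun _ => f s)
    fun {i} hi _ => hstep s i hi).trans ?_
  rw [Finset.sum_const, Nat.card_Ico, nsmul_eq_mul]
  exact mul_le_mul_of_nonneg_right (Nat.cast_le.2 (Nat.sub_le _ _)) (hf s)

lemma exists_forall_pow_mul_exp_neg_le {R D τ : ℝ} (hR : 1 < R) (hD : 0 ≤ D) (hτ : 0 < τ) :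
    ∃ κ ≥ 0, ∀ m : ℕ, D ^ m * exp (-(τ * R ^ m)) ≤ κ * (1 / 2) ^ m := by
  obtain ⟨j, hj⟩ := pow_unbounded_of_one_lt (2 * D) hR
  refine ⟨j.factorial / τ ^ j, by positivity, fun m => ?_⟩
  have hexp := pow_div_factorial_le_exp (τ * R ^ m) (by positivity) j
  have hpow : (2 * D) ^ m ≤ (R ^ m) ^ j := by
    rw [← pow_mul, mul_comm m j, pow_mul]
    exact pow_le_pow_left₀ (by positivity) hj.le m
  calc D ^ m * exp (-(τ * R ^ m)) ≤ D ^ m * ((τ * R ^ m) ^ j / j.factorial)⁻¹ := by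
        rw [exp_neg]
        gcongr
    _ = j.factorial / τ ^ j * ((2 * D) ^ m / (R ^ m) ^ j * (1 / 2) ^ m) := by
        rw [mul_pow τ, mul_pow, one_div, inv_pow]
        field_simp
    _ ≤ j.factorial / τ ^ j * (1 * (1 / 2) ^ m) := by
        gcongr
        exact div_le_one_of_le₀ hpow (by positivity)
    _ = j.factorial / τ ^ j * (1 / 2) ^ m := by rw [one_mul]

lemma summable_ceil_mul_cube_mul_pow_add_pow_mul_exp_neg {c R q D τ : ℝ} (hc : 0 ≤ c)
    (hR : 1 < R) (hq : 0 ≤ q) (hqR : R * q < 1) (hD : 0 ≤ D) (hτ : 0 < τ) :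
    Summable fun m : ℕ => (⌈c * R ^ (m + 1)⌉₊ : ℝ) *
      ((m : ℝ) ^ 3 * (q ^ m + D ^ m * exp (-(τ * R ^ m)))) := by
  obtain ⟨κ, _, hκ⟩ := exists_forall_pow_mul_exp_neg_le hR (by positivity : 0 ≤ R * D) hτ
  have hgeom : ∀ {x : ℝ}, 0 ≤ x → x < 1 → Summable fun m : ℕ => (m : ℝ) ^ 3 * x ^ m :=
    fun h0 h1 => summable_pow_mul_geometric_of_norm_lt_one 3 (by rwa [Real.norm_of_nonneg h0])
  have hceil : ∀ m : ℕ, (⌈c * R ^ (m + 1)⌉₊ : ℝ) ≤ (c + 1) * R * R ^ m := fun m => by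
    have hlt := Nat.ceil_lt_add_one (a := c * R ^ (m + 1)) (by positivity)
    have hone : 1 ≤ R ^ (m + 1) := one_le_pow₀ hR.le
    rw [pow_succ] at *
    linarith
  refine Summable.of_nonneg_of_le (fun m => by positivity) (fun m => ?_)
    (((hgeom (by positivity) hqR).mul_left ((c + 1) * R)).add
      ((hgeom (by norm_num) (by norm_num : (1 / 2 : ℝ) < 1)).mul_left ((c + 1) * R * κ)))
  calc (⌈c * R ^ (m + 1)⌉₊ : ℝ) * ((m : ℝ) ^ 3 * (q ^ m + D ^ m * exp (-(τ * R ^ m))))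
      ≤ (c + 1) * R * R ^ m * ((m : ℝ) ^ 3 * (q ^ m + D ^ m * exp (-(τ * R ^ m)))) := by
        gcongr
        exact hceil m
    _ = (c + 1) * R * (m : ℝ) ^ 3 * ((R * q) ^ m + (R * D) ^ m * exp (-(τ * R ^ m))) := by
        rw [mul_pow, mul_pow]
        ring
    _ ≤ (c + 1) * R * (m : ℝ) ^ 3 * ((R * q) ^ m + κ * (1 / 2) ^ m) := by
        gcongr ?_ * (_ + ?_)
        exact hκ m
    _ = _ := by ring

section Criterion

variable {E : Type*} [NormedAddCommGroup E] [InnerProductSpace ℝ E] [FiniteDimensional ℝ E]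
  [MeasurableSpace E] [BorelSpace E]

lemma norm_mul_heatOp_sub_heatOp_two_mul_le_of_exp {T : BCFOperator E} {A C τ Y : ℝ}
    (hT : ‖T‖ ≤ 1) (hA : 0 ≤ A) (hC0 : 0 ≤ C) (hY : 0 < Y) (hYτ : Y ≤ exp (-(4 * τ))) {s m : ℕ}
    (hm : m = s + 2)
    (hA' : ∀ t ≥ τ, ∀ w > 0,
      ‖T * gaussianIncrement (exp (-2 * t)) w ^ m‖ ≤ (A * (w / exp (-2 * t))) ^ m)
    (hC : ∀ v > 0, ∀ w > 0, ‖(gaussianIncrement v w : BCFOperator E)‖ ≤ C * (w / v)) :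
    ‖T * (heatOp Y - heatOp (2 * Y))‖ ≤ zetaThreeHalves *
      ((m : ℝ) ^ 3 * ((2 * exp 1 * A) ^ m + (2 * exp 1 * C) ^ m * exp (-τ))) := by
  have hz := zetaThreeHalves_nonneg
  have hlogY : log Y ≤ -(4 * τ) := (log_le_iff_le_exp hY).2 hYτ
  have hpow : Y ^ (1 / 4 : ℝ) ≤ exp (-τ) := by
    rw [rpow_def_of_pos hY]
    exact exp_le_exp.2 (by linarith)
  refine (norm_mul_heatOp_sub_heatOp_two_mul_le hT hA hC0 hY hm (fun v hv hvY w hw => ?_)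
    hC).trans ?_
  · have hlogv := log_le_log hv hvY
    rw [log_sqrt hY.le] at hlogv
    have hv' : exp (-2 * (-log v / 2)) = v := by
      rw [show -2 * (-log v / 2) = log v by ring, exp_log hv]
    simpa only [hv'] using hA' (-log v / 2) (by linarith) w hw
  · rw [mul_assoc]
    gcongr

/-- Since `R * (2 * exp 1 * A) < 1`, the `O(R ^ m)` dyadic scales on which the bound of order `m`
is used contribute a summable error. -/
theorem absolutelyContinuous_of_forall_norm_convOp_mul_gaussianIncrement_pow_le (μ : Measure E)
    [IsProbabilityMeasure μ] {A R τ : ℝ} (hA : 0 ≤ A) (hR : 1 < R)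
    (hAR : R * (2 * exp 1 * A) < 1) (hτ : 0 < τ)
    (h : ∀ m : ℕ, ∀ t ≥ τ * R ^ m, ∀ w > 0,
      ‖convOp μ * gaussianIncrement (exp (-2 * t)) w ^ m‖ ≤ (A * (w / exp (-2 * t))) ^ m) :
    μ ≪ volume := by
  obtain ⟨C, hC0, hC⟩ := exists_norm_gaussianIncrement_le E
  have hz := zetaThreeHalves_nonneg
  have hlog : 0 < log 2 := log_pos one_lt_two
  set c := 4 * τ / log 2 with hc
  set N : ℕ → ℕ := fun s => ⌈c * R ^ (s + 2)⌉₊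
  set G : ℕ → BCFOperator E := fun i => convOp μ * heatOp ((1 / 2) ^ i)
  have hstep : ∀ s i, N s ≤ i → dist (G i) (G (i + 1)) ≤ zetaThreeHalves * (((s + 2 : ℕ) : ℝ) ^ 3 *
      ((2 * exp 1 * A) ^ (s + 2) + (2 * exp 1 * C) ^ (s + 2) * exp (-(τ * R ^ (s + 2))))) := by
    intro s i hi
    have hYτ : ((1 / 2 : ℝ)) ^ (i + 1) ≤ exp (-(4 * (τ * R ^ (s + 2)))) := by
      rw [← log_le_iff_le_exp (by positivity), log_pow, one_div, log_inv]
      have hi' : c * R ^ (s + 2) ≤ i := Nat.ceil_le.1 hi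
      rw [hc, div_mul_eq_mul_div, div_le_iff₀ hlog] at hi'
      push_cast
      linarith
    have hle := norm_mul_heatOp_sub_heatOp_two_mul_le_of_exp (norm_convOp_le_one μ) hA hC0.le
      (by positivity) hYτ rfl (h (s + 2)) hC
    rwa [show (2 : ℝ) * (1 / 2) ^ (i + 1) = (1 / 2) ^ i by rw [pow_succ]; ring, mul_sub,
      ← dist_eq_norm, dist_comm] at hle
  have hNmono : Monotone N := fun a b hab => Nat.ceil_mono (by gcongr; exact hR.le)
  have hNlim : Tendsto N atTop atTop := tendsto_nat_ceil_atTop.comp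
    (((tendsto_pow_atTop_atTop_of_one_lt hR).comp (tendsto_add_atTop_nat 2)).const_mul_atTop
      (by positivity))
  refine absolutelyContinuous_of_cauchySeq_convOp_mul_heatOp μ (y := fun s => (1 / 2) ^ N s)
    (fun s => by positivity)
    ((tendsto_pow_atTop_nhds_zero_of_lt_one (by norm_num) (by norm_num)).comp hNlim)
    (cauchySeq_comp_of_forall_dist_succ_le hNmono (fun s => by positivity) hstep ?_)
  have hsum := (summable_nat_add_iff 2).2 <| summable_ceil_mul_cube_mul_pow_add_pow_mul_exp_neg
    (by positivity : 0 ≤ c) hR (by positivity : 0 ≤ 2 * exp 1 * A) hAR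
    (by positivity : 0 ≤ 2 * exp 1 * C) hτ
  simpa only [mul_left_comm zetaThreeHalves] using hsum.mul_left zetaThreeHalves

end Criterion

/-! ### The laws of the partial sums of a self-similar measure -/

namespace FiniteLaw

section OfWeights

variable {ι E : Type*} [Fintype ι] (w : ι → ℝ) (hw : ∀ i, 0 < w i) (hsum : ∑ i, w i = 1)
  (f : ι → E)

open Classical in
/-- The law of `f i` when `i` is drawn with probability `w i`. -/
noncomputable def ofWeights : FiniteLaw E where
  support := Finset.univ.image f
  weight x := ∑ i, if f i = x then w i else 0
  weight_pos x hx := by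
    obtain ⟨i, -, rfl⟩ := Finset.mem_image.1 hx
    refine Finset.sum_pos' (fun i' _ => ?_) ⟨i, Finset.mem_univ i, by simpa using hw i⟩
    split_ifs
    exacts [(hw i').le, le_rfl]
  sum_weight := by
    rw [Finset.sum_comm, ← hsum]
    exact Finset.sum_congr rfl fun i _ => by simp

lemma mem_support_ofWeights {x : E} : x ∈ (ofWeights w hw hsum f).support ↔ ∃ i, f i = x := by
  simp [ofWeights]

lemma card_support_ofWeights_le : (ofWeights w hw hsum f).support.card ≤ Fintype.card ι := by
  classical exact Finset.card_image_le

lemma measure_ofWeights [MeasurableSpace E] :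
    (ofWeights w hw hsum f).measure = ∑ i, ENNReal.ofReal (w i) • Measure.dirac (f i) := by
  classical
  have hweight (x : E) : ENNReal.ofReal ((ofWeights w hw hsum f).weight x) =
      ∑ i, if f i = x then ENNReal.ofReal (w i) else 0 := by
    simp only [ofWeights]
    rw [ENNReal.ofReal_sum_of_nonneg fun i _ => by split_ifs; exacts [(hw i).le, le_rfl]]
    exact Finset.sum_congr rfl fun i _ => by split_ifs <;> simp
  simp only [measure, hweight, Finset.sum_smul]
  rw [Finset.sum_comm]
  refine Finset.sum_congr rfl fun i _ => ?_
  simp only [ite_smul, zero_smul, Finset.sum_ite_eq,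
    if_pos ((mem_support_ofWeights w hw hsum f).2 ⟨i, rfl⟩)]

end OfWeights

end FiniteLaw

namespace UIFS

variable {d : ℕ} (F : UIFS d)

lemma lam_pos : 0 < F.lam := F.hlam.1

lemma lam_lt_one : F.lam < 1 := F.hlam.2

/-- The linear part `(λU)^k` of a `k`-fold composition of the maps of `F`. -/
noncomputable def linearPart (k : ℕ) : EuclideanSpace ℝ (Fin d) ≃L[ℝ] EuclideanSpace ℝ (Fin d) :=
  scaledIsometry (F.lam ^ k) (pow_pos F.lam_pos k).ne' (F.U ^ k)

lemma linearPart_apply (k : ℕ) (x : EuclideanSpace ℝ (Fin d)) :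
    F.linearPart k x = F.lam ^ k • (F.U ^ k) x := rfl

lemma linearPart_zero : ⇑(F.linearPart 0) = id := by
  ext1 x
  simp [linearPart_apply]

lemma linearPart_add (k n : ℕ) (x : EuclideanSpace ℝ (Fin d)) :
    F.linearPart (k + n) x = F.linearPart k (F.linearPart n x) := by
  simp only [linearPart_apply, map_smul, smul_smul, pow_add, LinearIsometryEquiv.coe_mul,
    Function.comp_apply, mul_comm]

lemma measurable_linearPart (k : ℕ) : Measurable (F.linearPart k) :=
  (F.linearPart k).continuous.measurable

instance (k : ℕ) (ρ : Measure (EuclideanSpace ℝ (Fin d))) [IsProbabilityMeasure ρ] :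
    IsProbabilityMeasure (ρ.map (F.linearPart k)) :=
  Measure.isProbabilityMeasure_map (F.measurable_linearPart k).aemeasurable

lemma map_linearPart_map_linearPart (k n : ℕ) (ρ : Measure (EuclideanSpace ℝ (Fin d))) :
    (ρ.map (F.linearPart n)).map (F.linearPart k) = ρ.map (F.linearPart (k + n)) := by
  rw [Measure.map_map (F.measurable_linearPart k) (F.measurable_linearPart n)]
  congr 1
  ext1 x
  exact (F.linearPart_add k n x).symm

lemma map_linearPart_conv (k : ℕ) (ρ ρ' : Measure (EuclideanSpace ℝ (Fin d)))
    [IsProbabilityMeasure ρ] [IsProbabilityMeasure ρ'] :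
    (ρ.conv ρ').map (F.linearPart k) =
      (ρ.map (F.linearPart k)).conv (ρ'.map (F.linearPart k)) :=
  Measure.map_conv_continuousLinearMap
    (F.linearPart k : EuclideanSpace ℝ (Fin d) →L[ℝ] EuclideanSpace ℝ (Fin d))

lemma prod_p_pos {k : ℕ} (j : Fin k → Fin F.m) : 0 < ∏ t, F.p (j t) :=
  Finset.prod_pos fun t _ => F.hp (j t)

lemma sum_prod_p (k : ℕ) : ∑ j : Fin k → Fin F.m, ∏ t, F.p (j t) = 1 := by
  rw [← Fintype.piFinset_univ, ← Finset.prod_univ_sum, F.hsum, Finset.prod_const_one]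

/-- The law of the partial sum `∑_{t < k} λ^t U^t X_t`. -/
noncomputable def stepLaw (k : ℕ) : FiniteLaw (EuclideanSpace ℝ (Fin d)) :=
  .ofWeights (fun j : Fin k → Fin F.m => ∏ t, F.p (j t)) F.prod_p_pos (F.sum_prod_p k) F.pt

lemma mem_support_stepLaw {k : ℕ} {x : EuclideanSpace ℝ (Fin d)} :
    x ∈ (F.stepLaw k).support ↔ x ∈ F.V k :=
  FiniteLaw.mem_support_ofWeights _ _ _ _

lemma card_support_stepLaw_le (k : ℕ) : (F.stepLaw k).support.card ≤ F.m ^ k := by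
  simpa [stepLaw] using FiniteLaw.card_support_ofWeights_le _ F.prod_p_pos (F.sum_prod_p k) F.pt

lemma sum_negMulLog_weight_stepLaw (k : ℕ) :
    ∑ x ∈ (F.stepLaw k).support, negMulLog ((F.stepLaw k).weight x) = F.Hk k := rfl

lemma sep_le_norm_sub {k : ℕ} {x x' : EuclideanSpace ℝ (Fin d)} (hx : x ∈ F.V k)
    (hx' : x' ∈ F.V k) (hne : x ≠ x') : F.sep k ≤ ‖x - x'‖ := by
  refine csInf_le ⟨0, ?_⟩ ⟨x, hx, x', hx', hne, (dist_eq_norm _ _).symm⟩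
  rintro e ⟨_, _, _, _, _, rfl⟩
  exact dist_nonneg

lemma exists_norm_le_of_mem_V : ∃ R : ℝ, ∀ k, ∀ x ∈ F.V k, ‖x‖ ≤ R := by
  refine ⟨(1 - F.lam)⁻¹ * ∑ i, ‖F.a i‖, ?_⟩
  rintro k _ ⟨j, rfl⟩
  have hlam := F.lam_pos.le
  have hterm (t : Fin k) : ‖F.lam ^ (t : ℕ) • (F.U ^ (t : ℕ)) (F.a (j t))‖ ≤
      F.lam ^ (t : ℕ) * ∑ i, ‖F.a i‖ := by
    rw [norm_smul, norm_of_nonneg (by positivity), LinearIsometryEquiv.norm_map]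
    gcongr
    exact Finset.single_le_sum (f := fun i => ‖F.a i‖) (fun _ _ => norm_nonneg _)
      (Finset.mem_univ _)
  calc ‖F.pt j‖ ≤ ∑ t : Fin k, F.lam ^ (t : ℕ) * ∑ i, ‖F.a i‖ :=
        norm_sum_le_of_le _ fun t _ => hterm t
    _ = (∑ t ∈ Finset.range k, F.lam ^ t) * ∑ i, ‖F.a i‖ := by
      rw [← Finset.sum_mul, Finset.sum_range]
    _ ≤ (1 - F.lam)⁻¹ * ∑ i, ‖F.a i‖ := by
      gcongr
      rw [← tsum_geometric_of_lt_one hlam F.lam_lt_one]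
      exact (summable_geometric_of_lt_one hlam F.lam_lt_one).sum_le_tsum _
        fun _ _ => by positivity

lemma pt_append {k n : ℕ} (i : Fin k → Fin F.m) (j : Fin n → Fin F.m) :
    F.pt (Fin.append i j) = F.pt i + F.linearPart k (F.pt j) := by
  simp only [pt, Fin.sum_univ_add, Fin.append_left, Fin.append_right, Fin.val_castAdd,
    Fin.val_natAdd, map_sum, ← linearPart_apply, linearPart_add]

lemma lintegral_stepLaw_measure (k : ℕ) {f : EuclideanSpace ℝ (Fin d) → ENNReal}
    (hf : Measurable f) :
    ∫⁻ x, f x ∂(F.stepLaw k).measure =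
      ∑ j : Fin k → Fin F.m, ENNReal.ofReal (∏ t, F.p (j t)) * f (F.pt j) := by
  simp only [stepLaw, FiniteLaw.measure_ofWeights, lintegral_finsetSum_measure,
    lintegral_smul_measure, lintegral_dirac' _ hf, smul_eq_mul]

lemma measure_stepLaw_zero : (F.stepLaw 0).measure = Measure.dirac 0 := by
  simp [stepLaw, FiniteLaw.measure_ofWeights, pt]

lemma measure_stepLaw_add (k n : ℕ) : (F.stepLaw (k + n)).measure =
    (F.stepLaw k).measure.conv ((F.stepLaw n).measure.map (F.linearPart k)) := by
  refine Measure.ext_of_lintegral _ fun f hf => ?_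
  have hinner (x : EuclideanSpace ℝ (Fin d)) :
      ∫⁻ y, f (x + y) ∂(F.stepLaw n).measure.map (F.linearPart k) =
        ∑ j : Fin n → Fin F.m,
          ENNReal.ofReal (∏ t, F.p (j t)) * f (x + F.linearPart k (F.pt j)) := by
    rw [lintegral_map (by fun_prop) (F.measurable_linearPart k),
      F.lintegral_stepLaw_measure n (f := fun y => f (x + F.linearPart k y))
        (hf.comp ((F.measurable_linearPart k).const_add x))]
  simp only [Measure.lintegral_conv hf, hinner]
  rw [F.lintegral_stepLaw_measure _ hf, F.lintegral_stepLaw_measure k (by fun_prop),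
    ← (Fin.appendEquiv k n).sum_comp, Fintype.sum_prod_type]
  simp only [Fin.appendEquiv, Equiv.coe_fn_mk, pt_append, Fin.prod_univ_add, Fin.append_left,
    Fin.append_right, ENNReal.ofReal_mul (F.prod_p_pos _).le, Finset.mul_sum, mul_assoc]

variable {μ : Measure (EuclideanSpace ℝ (Fin d))} [IsProbabilityMeasure μ]

lemma eq_measure_stepLaw_one_conv_map
    (hss : μ = ∑ i, ENNReal.ofReal (F.p i) • Measure.map (F.S i) μ) :
    μ = (F.stepLaw 1).measure.conv (μ.map (F.linearPart 1)) := by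
  conv_lhs => rw [hss]
  refine Measure.ext_of_lintegral _ fun f hf => ?_
  have hS (i : Fin F.m) : Measurable (F.S i) := by
    have := F.U.continuous
    exact Continuous.measurable (by unfold S; fun_prop)
  rw [Measure.lintegral_conv hf, F.lintegral_stepLaw_measure 1
    (Measurable.lintegral_prod_right' (f := fun q : _ × _ => f (q.1 + q.2)) (by fun_prop)),
    ← (Equiv.funUnique (Fin 1) (Fin F.m)).symm.sum_comp, lintegral_finsetSum_measure]
  refine Finset.sum_congr rfl fun i _ => ?_
  rw [lintegral_smul_measure, lintegral_map hf (hS i),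
    lintegral_map (by fun_prop) (F.measurable_linearPart 1)]
  simp [pt, S, linearPart_apply, add_comm]

lemma eq_measure_stepLaw_conv_map
    (hss : μ = ∑ i, ENNReal.ofReal (F.p i) • Measure.map (F.S i) μ) (k : ℕ) :
    μ = (F.stepLaw k).measure.conv (μ.map (F.linearPart k)) := by
  induction k with
  | zero => rw [measure_stepLaw_zero, linearPart_zero, Measure.map_id, Measure.dirac_zero_conv]
  | succ k ih =>
    rw [measure_stepLaw_add, ← map_linearPart_map_linearPart, Measure.conv_assoc,
      ← map_linearPart_conv, ← F.eq_measure_stepLaw_one_conv_map hss]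
    exact ih

end UIFS

/-! ### Entropy of the partial sums -/

lemma natCast_pow_sq_mul_exp_neg_exp_le {m : ℕ} (hm : 0 < m) {δ : ℝ} (hδ : 0 < δ) (k : ℕ) :
    ((m : ℝ) ^ k) ^ 2 * exp (-(exp (2 * δ * k) / 8)) ≤ exp (4 * log m ^ 2 / δ ^ 2) := by
  have hpow : (m : ℝ) ^ k = exp (k * log m) := by
    rw [exp_nat_mul, exp_log (by exact_mod_cast hm)]
  have hquad : 2 * δ ^ 2 * k ^ 2 ≤ exp (2 * δ * k) := by
    have hnonneg : 0 ≤ 2 * δ * k := by positivity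
    linear_combination quadratic_le_exp_of_nonneg hnonneg + hnonneg
  have hcomplete : 4 * log m ^ 2 / δ ^ 2 - (2 * (k * log m) - δ ^ 2 * k ^ 2 / 4) =
      (δ * k / 2 - 2 * log m / δ) ^ 2 := by field
  rw [hpow, ← exp_nat_mul, ← exp_add, exp_le_exp]
  push_cast
  linarith [sq_nonneg (δ * k / 2 - 2 * log m / δ)]

namespace UIFS

variable {d : ℕ} (F : UIFS d)

lemma log_splittingRate_pos (hMlb : 1 < F.splittingRate) (hMub : F.splittingRate < ⊤) :
    0 < log F.splittingRate.toReal :=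
  log_pos (by simpa using (ENNReal.toReal_lt_toReal ENNReal.one_ne_top hMub.ne).2 hMlb)

variable {L h : ℝ}

lemma eventually_exp_neg_mul_le_sep (hL : F.splittingRate < ENNReal.ofReal (exp L)) :
    ∀ᶠ k : ℕ in atTop, exp (-L * k) ≤ F.sep k := by
  filter_upwards [eventually_lt_of_limsup_lt hL, eventually_ge_atTop 1] with k hk hk1
  have hkpos : (0 : ℝ) < k := by exact_mod_cast hk1
  have hneg : -(1 : ℝ) / k < 0 := div_neg_of_neg_of_pos (by norm_num) hkpos
  have hsep : 0 < F.sep k := by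
    by_contra hc
    rw [ENNReal.ofReal_of_nonpos (not_lt.1 hc), ENNReal.zero_rpow_of_neg hneg] at hk
    exact not_top_lt hk
  rw [ENNReal.ofReal_rpow_of_pos hsep, ENNReal.ofReal_lt_ofReal_iff (exp_pos _),
    ← log_lt_iff_lt_exp (rpow_pos_of_pos hsep _), log_rpow hsep, neg_div, neg_mul,
    one_div_mul_eq_div, neg_lt, lt_div_iff₀ hkpos] at hk
  exact (le_log_iff_exp_le hsep).1 hk.le

lemma Hk_nonneg (k : ℕ) : 0 ≤ F.Hk k := by
  rw [← F.sum_negMulLog_weight_stepLaw]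
  exact Finset.sum_nonneg fun x hx =>
    negMulLog_nonneg ((F.stepLaw k).weight_pos x hx).le ((F.stepLaw k).weight_le_one hx)

lemma eventually_mul_le_Hk (hh : h < F.garsiaEntropy) : ∀ᶠ k : ℕ in atTop, h * k ≤ F.Hk k := by
  have hbdd : IsBoundedUnder (· ≥ ·) atTop fun k : ℕ => F.Hk k / k :=
    isBoundedUnder_of ⟨0, fun k => div_nonneg (F.Hk_nonneg k) (Nat.cast_nonneg k)⟩
  filter_upwards [eventually_lt_of_lt_liminf hh hbdd, eventually_ge_atTop 1] with k hk hk1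
  exact ((lt_div_iff₀ (by exact_mod_cast hk1)).1 hk).le

lemma exists_diffEntropy_stepLaw_one_le : ∃ C : ℝ, ∀ k, (F.stepLaw k).diffEntropy 1 ≤ C := by
  obtain ⟨R, hR⟩ := F.exists_norm_le_of_mem_V
  have hmoment (k : ℕ) := (F.stepLaw k).integral_norm_sq_mul_density_le one_pos fun x hx =>
    hR k x (F.mem_support_stepLaw.1 hx)
  exact ⟨_, fun k => ((F.stepLaw k).diffEntropy_le one_pos).trans
    (add_le_add le_rfl (mul_le_mul_of_nonneg_left (hmoment k) (by positivity)))⟩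

lemma le_diffEntropy_stepLaw {L' : ℝ} (hL : L' < L) {k : ℕ} (hsep : exp (-L' * k) ≤ F.sep k) :
    F.Hk k - d * L * k - 2 * exp (4 * log F.m ^ 2 / (L - L') ^ 2) ≤
      (F.stepLaw k).diffEntropy (exp (-2 * L * k)) := by
  have hlow := (F.stepLaw k).le_diffEntropy_of_separated (y := exp (-2 * L * k)) (exp_pos _)
    (exp_pos (-L' * k)).le fun x hx x' hx' hne => hsep.trans
      (F.sep_le_norm_sub (F.mem_support_stepLaw.1 hx) (F.mem_support_stepLaw.1 hx') hne)
  have hratio : exp (-L' * k) ^ 2 / (8 * exp (-2 * L * k)) = exp (2 * (L - L') * k) / 8 := by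
    rw [← exp_nat_mul, div_mul_eq_div_div_swap, ← exp_sub]
    congr 2
    push_cast
    ring
  rw [F.sum_negMulLog_weight_stepLaw, log_mul (by positivity) (exp_pos _).ne', log_exp,
    finrank_euclideanSpace, Fintype.card_fin, hratio] at hlow
  have hlog : 0 ≤ (d : ℝ) / 2 * log (2 * π) :=
    mul_nonneg (by positivity) (log_nonneg (by linarith [pi_gt_three]))
  have herror : ((F.stepLaw k).support.card : ℝ) ^ 2 * exp (-(exp (2 * (L - L') * k) / 8)) ≤
      exp (4 * log F.m ^ 2 / (L - L') ^ 2) := by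
    refine le_trans ?_ (natCast_pow_sq_mul_exp_neg_exp_le F.hm (sub_pos.2 hL) k)
    gcongr
    exact_mod_cast F.card_support_stepLaw_le k
  linarith

lemma exists_eventually_le_diffEntropy_stepLaw (hMlb : 1 < F.splittingRate)
    (hMub : F.splittingRate < ⊤) (hL : log F.splittingRate.toReal < L)
    (hh : h < F.garsiaEntropy) :
    ∃ C : ℝ, ∀ᶠ k : ℕ in atTop,
      (h - d * L) * k - C ≤ (F.stepLaw k).diffEntropy (exp (-2 * L * k)) := by
  obtain ⟨L', hML', hL'L⟩ := exists_between hL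
  have hM : 0 < F.splittingRate.toReal :=
    ENNReal.toReal_pos (zero_lt_one.trans hMlb).ne' hMub.ne
  have hlt : F.splittingRate < ENNReal.ofReal (exp L') := by
    rw [← ENNReal.ofReal_toReal hMub.ne, ENNReal.ofReal_lt_ofReal_iff (exp_pos _)]
    exact (log_lt_iff_lt_exp hM).1 hML'
  refine ⟨2 * exp (4 * log F.m ^ 2 / (L - L') ^ 2), ?_⟩
  filter_upwards [F.eventually_exp_neg_mul_le_sep hlt, F.eventually_mul_le_Hk hh] with k hsep hH
  linarith [F.le_diffEntropy_stepLaw hL'L hsep]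

lemma le_mul_of_lt_garsiaEntropy (hMlb : 1 < F.splittingRate) (hMub : F.splittingRate < ⊤)
    (hL : log F.splittingRate.toReal < L) (hh : h < F.garsiaEntropy) : h ≤ d * L := by
  obtain ⟨C, hC⟩ := F.exists_eventually_le_diffEntropy_stepLaw hMlb hMub hL hh
  obtain ⟨C', hC'⟩ := F.exists_diffEntropy_stepLaw_one_le
  have hLpos := (F.log_splittingRate_pos hMlb hMub).trans hL
  by_contra! hlt
  obtain ⟨k, hk, hlarge⟩ := (hC.and ((tendsto_natCast_atTop_atTop.const_mul_atTop
    (sub_pos.2 hlt)).eventually_gt_atTop (C' + C))).exists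
  have hvar : exp (-2 * L * k) ≤ 1 := by
    rw [exp_le_one_iff, mul_assoc, neg_mul, neg_nonpos]
    positivity
  linarith [(F.stepLaw k).diffEntropy_mono (exp_pos _) hvar, hC' k]

lemma garsiaEntropy_le (hMlb : 1 < F.splittingRate) (hMub : F.splittingRate < ⊤) :
    F.garsiaEntropy ≤ d * log F.splittingRate.toReal := by
  refine le_of_forall_lt_imp_le_of_dense fun h hh => ?_
  refine ge_of_tendsto (x := 𝓝[>] (log F.splittingRate.toReal))
    ((continuous_const.mul continuous_id).continuousWithinAt.tendsto) ?_
  filter_upwards [self_mem_nhdsWithin] with L hL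
  exact F.le_mul_of_lt_garsiaEntropy hMlb hMub hL hh

end UIFS

/-! ### Scales at which the entropy grows slowly -/

lemma exists_lt_succ_sub_le {f : ℕ → ℝ} {n : ℕ} {B : ℝ} (hn : n ≠ 0) (hf : f n - f 0 ≤ n * B) :
    ∃ a < n, f (a + 1) - f a ≤ B := by
  by_contra! h
  have hlt := Finset.sum_lt_sum_of_nonempty (Finset.nonempty_range_iff.2 hn)
    fun a ha => h a (Finset.mem_range.1 ha)
  rw [Finset.sum_range_sub, Finset.sum_const, Finset.card_range, nsmul_eq_mul] at hlt
  exact hlt.not_ge hf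

namespace UIFS

variable {d : ℕ} (F : UIFS d)

/-- The Lyapunov exponent `log λ⁻¹`: the maps of `F` contract distances by `exp (-log λ⁻¹)`. -/
noncomputable def lyapunovExponent : ℝ := log F.lam⁻¹

lemma lyapunovExponent_pos : 0 < F.lyapunovExponent :=
  log_pos ((one_lt_inv₀ F.lam_pos).2 F.lam_lt_one)

lemma lam_pow_eq_exp (k : ℕ) : F.lam ^ k = exp (-(k * F.lyapunovExponent)) := by
  rw [lyapunovExponent, log_inv, mul_neg, neg_neg, exp_nat_mul, exp_log F.lam_pos]

lemma lam_pow_sq_mul_exp (k : ℕ) (t : ℝ) :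
    (F.lam ^ k) ^ 2 * exp (-2 * (t - k * F.lyapunovExponent)) = exp (-2 * t) := by
  rw [lam_pow_eq_exp, ← exp_nat_mul, ← exp_add]
  congr 1
  push_cast
  ring

lemma lam_sq_lt_one : F.lam ^ 2 < 1 := pow_lt_one₀ F.lam_pos.le F.lam_lt_one two_ne_zero

variable {t : ℝ}

lemma hasTranslationBound_stepLaw {B : ℝ} {a k : ℕ}
    (hB : (F.stepLaw k).diffEntropy (exp (-2 * (t - (a + 1 : ℕ) * F.lyapunovExponent))) -
      (F.stepLaw k).diffEntropy (exp (-2 * (t - a * F.lyapunovExponent))) ≤ B) :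
    HasTranslationBound (F.stepLaw (a + 1 + k)).measure (exp (-2 * t)) (B / (1 - F.lam ^ 2)) := by
  set Y := exp (-2 * (t - (a + 1 : ℕ) * F.lyapunovExponent)) with hYdef
  have hY : 0 < Y := exp_pos _
  have hsmaller : exp (-2 * (t - a * F.lyapunovExponent)) = F.lam ^ 2 * Y := by
    rw [← pow_one F.lam, ← F.lam_pow_sq_mul_exp 1, hYdef]
    push_cast
    ring_nf
  rw [hsmaller] at hB
  have hbound := (F.stepLaw k).hasTranslationBound_measure (mul_pos (pow_pos F.lam_pos 2) hY)
    (mul_lt_of_lt_one_left hY F.lam_sq_lt_one)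
  rw [mul_div_cancel_right₀ _ hY.ne'] at hbound
  simp only [measure_stepLaw_add, ← F.lam_pow_sq_mul_exp (a + 1) t]
  exact ((hbound.mono hY.le (div_le_div_of_nonneg_right hB
    (sub_nonneg.2 F.lam_sq_lt_one.le))).map_scaledIsometry _ _).conv_left _

variable {L h β ε r : ℝ}

/-- Pigeonhole: between the scales `exp (-t)` and `1` the entropy of the `k`-step law increases by
at most `ε k`, so one of the `n ≥ β k` steps contributes at most `ε / β`. -/
lemma exists_diffEntropy_stepLaw_sub_le {C C' : ℝ} {k n : ℕ}
    (hlow : (h - d * L) * k - C ≤ (F.stepLaw k).diffEntropy (exp (-2 * L * k)))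
    (hupp : (F.stepLaw k).diffEntropy 1 ≤ C') (hC : C + C' ≤ (ε - (d * L - h)) * k)
    (hβ : 0 < β) (hε : 0 ≤ ε) (hn : n ≠ 0) (hkn : β * k ≤ n) (htk : t ≤ k * L)
    (hnt : n * F.lyapunovExponent ≤ t) :
    ∃ a < n, (F.stepLaw k).diffEntropy (exp (-2 * (t - (a + 1 : ℕ) * F.lyapunovExponent))) -
      (F.stepLaw k).diffEntropy (exp (-2 * (t - a * F.lyapunovExponent))) ≤ ε / β := by
  refine exists_lt_succ_sub_le (f := fun a : ℕ =>
    (F.stepLaw k).diffEntropy (exp (-2 * (t - a * F.lyapunovExponent)))) hn ?_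
  have hlast : (F.stepLaw k).diffEntropy (exp (-2 * (t - n * F.lyapunovExponent))) ≤ C' :=
    ((F.stepLaw k).diffEntropy_mono (exp_pos _) (exp_le_one_iff.2 (by linarith))).trans hupp
  have hfirst : (F.stepLaw k).diffEntropy (exp (-2 * L * k)) ≤
      (F.stepLaw k).diffEntropy (exp (-2 * (t - (0 : ℕ) * F.lyapunovExponent))) :=
    (F.stepLaw k).diffEntropy_mono (exp_pos _) (exp_le_exp.2 (by push_cast; linarith))
  have hsteps : ε * k ≤ n * (ε / β) := calc
    ε * k = β * k * (ε / β) := by field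
    _ ≤ n * (ε / β) := by gcongr
  refine (sub_le_sub hlast (hlow.trans hfirst)).trans ?_
  linarith

lemma natCeil_add_natCeil_mul_le {l : ℝ} (hL : 0 < L) (hβ : 0 < β) (hl : 0 < l) (ht : 0 < t)
    (hlarge : (2 + β) * l ≤ (1 - (1 + β) * l / L - r) * t) :
    ((⌈β * ⌈t / L⌉₊⌉₊ : ℝ) + ⌈t / L⌉₊) * l ≤ t - r * t := by
  have hk : (⌈t / L⌉₊ : ℝ) ≤ t / L + 1 := (Nat.ceil_lt_add_one (by positivity)).le
  have hn : (⌈β * ⌈t / L⌉₊⌉₊ : ℝ) ≤ β * ⌈t / L⌉₊ + 1 :=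
    (Nat.ceil_lt_add_one (by positivity)).le
  calc ((⌈β * ⌈t / L⌉₊⌉₊ : ℝ) + ⌈t / L⌉₊) * l
      ≤ (β * ⌈t / L⌉₊ + 1 + ⌈t / L⌉₊) * l := by gcongr
    _ = (1 + (1 + β) * ⌈t / L⌉₊) * l := by ring
    _ ≤ (1 + (1 + β) * (t / L + 1)) * l := by gcongr
    _ = (2 + β) * l + (1 + β) * l / L * t := by ring
    _ ≤ t - r * t := by linarith

lemma eventually_exists_hasTranslationBound_stepLaw (hMlb : 1 < F.splittingRate)
    (hMub : F.splittingRate < ⊤) (hL : log F.splittingRate.toReal < L)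
    (hh : h < F.garsiaEntropy) (hβ : 0 < β) (hε : d * L - h < ε) (hr : 0 < r)
    (hrL : r < 1 - (1 + β) * F.lyapunovExponent / L) :
    ∀ᶠ t in atTop, ∃ K : ℕ,
      HasTranslationBound (F.stepLaw K).measure (exp (-2 * t)) (ε / β / (1 - F.lam ^ 2)) ∧
        r * t ≤ t - K * F.lyapunovExponent := by
  obtain ⟨C, hC⟩ := F.exists_eventually_le_diffEntropy_stepLaw hMlb hMub hL hh
  obtain ⟨C', hC'⟩ := F.exists_diffEntropy_stepLaw_one_le
  have hL0 : 0 < L := (F.log_splittingRate_pos hMlb hMub).trans hL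
  have hε0 : 0 ≤ ε := (sub_nonneg.2 (F.le_mul_of_lt_garsiaEntropy hMlb hMub hL hh)).trans hε.le
  have hl := F.lyapunovExponent_pos
  have hceil : Tendsto (fun t : ℝ => ⌈t / L⌉₊) atTop atTop :=
    tendsto_nat_ceil_atTop.comp (tendsto_id.atTop_div_const hL0)
  filter_upwards [hceil.eventually hC, hceil.eventually
      ((tendsto_natCast_atTop_atTop.const_mul_atTop (sub_pos.2 hε)).eventually_ge_atTop (C + C')),
    (tendsto_id.const_mul_atTop (sub_pos.2 hrL)).eventually_ge_atTop _, eventually_gt_atTop 0]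
    with t hlow hlarge hroom ht
  have hKl := natCeil_add_natCeil_mul_le hL0 hβ hl ht hroom
  set k := ⌈t / L⌉₊
  set n := ⌈β * k⌉₊
  have hk : 0 < k := Nat.ceil_pos.2 (by positivity)
  have hn : n ≠ 0 := (Nat.ceil_pos.2 (by positivity)).ne'
  have hnl : n * F.lyapunovExponent ≤ t := by
    linarith [mul_pos (Nat.cast_pos (α := ℝ).2 hk) hl, mul_pos hr ht]
  obtain ⟨a, han, ha⟩ := F.exists_diffEntropy_stepLaw_sub_le hlow (hC' k) hlarge hβ hε0 hn
    (Nat.le_ceil _) ((div_le_iff₀ hL0).1 (Nat.le_ceil _)) hnl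
  refine ⟨a + 1 + k, F.hasTranslationBound_stepLaw ha, ?_⟩
  have hK : ((a + 1 + k : ℕ) : ℝ) ≤ n + k := by exact_mod_cast Nat.add_le_add_right han k
  linarith [mul_le_mul_of_nonneg_right hK hl.le]

/-- Two consecutive blocks of digits supply the two moduli whose product bounds an increment. -/
lemma eventually_exists_norm_convOp_stepLaw_mul_gaussianIncrement_le {A : ℝ} (hr : 0 < r)
    (hblock : ∀ᶠ t in atTop, ∃ K : ℕ,
      HasTranslationBound (F.stepLaw K).measure (exp (-2 * t)) A ∧
        r * t ≤ t - K * F.lyapunovExponent) :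
    ∀ᶠ t in atTop, ∃ K : ℕ,
      (∀ w > 0, ‖convOp (F.stepLaw K).measure * gaussianIncrement (exp (-2 * t)) w‖ ≤
        A * (w / exp (-2 * t))) ∧ r ^ 2 * t ≤ t - K * F.lyapunovExponent := by
  obtain ⟨τ, hτ⟩ := eventually_atTop.1 hblock
  filter_upwards [hblock, (tendsto_id.const_mul_atTop hr).eventually_ge_atTop τ]
    with t ⟨K₁, h₁, hK₁⟩ ht
  obtain ⟨K₂, h₂, hK₂⟩ := hτ (t - K₁ * F.lyapunovExponent) (ht.trans hK₁)
  refine ⟨K₁ + K₂, fun w hw => ?_, ?_⟩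
  · have h₂' := h₂.map_scaledIsometry (pow_pos F.lam_pos K₁).ne' (F.U ^ K₁)
    rw [F.lam_pow_sq_mul_exp] at h₂'
    simp only [measure_stepLaw_add]
    exact h₁.norm_convOp_conv_mul_gaussianIncrement_le (exp_pos _).le h₂' hw
  · push_cast
    linarith [mul_le_mul_of_nonneg_left hK₁ hr.le]

end UIFS

/-! ### Increments of the self-similar measure -/

section Parameters

variable {q l L ε : ℝ}

lemma two_mul_log_inv_mul_sq_le (hq : 0 < q) : 2 * log q⁻¹ * q ^ 2 ≤ 1 - q ^ 2 := by
  have hlog : log (q⁻¹ ^ 2) ≤ q⁻¹ ^ 2 - 1 := log_le_sub_one_of_pos (by positivity)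
  rw [log_pow, Nat.cast_ofNat] at hlog
  calc 2 * log q⁻¹ * q ^ 2 ≤ (q⁻¹ ^ 2 - 1) * q ^ 2 := by gcongr
    _ = 1 - q ^ 2 := by field

lemma two_mul_exp_one_mul_div_lt (hq : 0 < q) (hq1 : q ^ 2 < 1) (hl : 0 < l)
    (hlq : 2 * l * q ^ 2 ≤ 1 - q ^ 2) (hL : l < L) (hε : 0 ≤ ε)
    (h : ε * L ^ 2 < 1 / 27 * (L - l) ^ 3 * q ^ 4) :
    2 * exp 1 * (ε / ((L - l) / (3 * l)) / (1 - q ^ 2)) < (2 / 3 * ((L - l) / L)) ^ 2 := by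
  have hLl : 0 < L - l := sub_pos.2 hL
  have hL0 : 0 < L := hl.trans hL
  have hbound : ε / ((L - l) / (3 * l)) / (1 - q ^ 2) ≤ ((L - l) / L) ^ 2 * q ^ 2 / 18 := calc
    ε / ((L - l) / (3 * l)) / (1 - q ^ 2)
        ≤ ε / ((L - l) / (3 * l)) / (2 * l * q ^ 2) := by gcongr
    _ = ε * L ^ 2 * (3 / (2 * (L - l) * q ^ 2 * L ^ 2)) := by field
    _ ≤ 1 / 27 * (L - l) ^ 3 * q ^ 4 * (3 / (2 * (L - l) * q ^ 2 * L ^ 2)) := by gcongr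
    _ = ((L - l) / L) ^ 2 * q ^ 2 / 18 := by field
  have he : exp 1 < 4 := exp_one_lt_d9.trans (by norm_num)
  calc 2 * exp 1 * (ε / ((L - l) / (3 * l)) / (1 - q ^ 2))
      ≤ 2 * exp 1 * (((L - l) / L) ^ 2 * q ^ 2 / 18) := by gcongr
    _ < 2 * 4 * (((L - l) / L) ^ 2 * 1 / 18) := by gcongr
    _ = (2 / 3 * ((L - l) / L)) ^ 2 := by ring

/-- The choice `β = (L - l) / (3 l)` makes the limiting value `1 - (1 + β) l / L` of `r` equal to
`2 (L - l) / (3 L)`; the factor `1 / 27` of the hypothesis is tuned to it. -/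
lemma exists_radius_of_mul_sq_lt (hq : 0 < q) (hq1 : q ^ 2 < 1) (hl : 0 < l)
    (hlq : 2 * l * q ^ 2 ≤ 1 - q ^ 2) (hL : l < L) (hε : 0 ≤ ε)
    (h : ε * L ^ 2 < 1 / 27 * (L - l) ^ 3 * q ^ 4) :
    ∃ β > 0, ∃ r > 0, r < 1 ∧ 2 * exp 1 * (ε / β / (1 - q ^ 2)) < r ^ 2 ∧
      r < 1 - (1 + β) * l / L := by
  have hLl : 0 < L - l := sub_pos.2 hL
  have hL0 : 0 < L := hl.trans hL
  have hβ0 : 0 < (L - l) / (3 * l) := div_pos hLl (by positivity)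
  have hβ : 1 - (1 + (L - l) / (3 * l)) * l / L = 2 / 3 * ((L - l) / L) := by field
  have hσ1 : (L - l) / L < 1 := (div_lt_one hL0).2 (by linarith)
  have hsqrt : √(2 * exp 1 * (ε / ((L - l) / (3 * l)) / (1 - q ^ 2))) < 2 / 3 * ((L - l) / L) :=
    (sqrt_lt' (mul_pos (by norm_num) (div_pos hLl hL0))).2
      (two_mul_exp_one_mul_div_lt hq hq1 hl hlq hL hε h)
  obtain ⟨r, hr, hrσ⟩ := exists_between hsqrt
  have hr0 : 0 < r := (sqrt_nonneg _).trans_lt hr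
  exact ⟨(L - l) / (3 * l), hβ0, r, hr0, by linarith, (sqrt_lt' hr0).1 hr,
    hrσ.trans_eq hβ.symm⟩

end Parameters

namespace UIFS

variable {d : ℕ} (F : UIFS d)

lemma exists_eventually_norm_convOp_stepLaw_mul_gaussianIncrement_le
    (hMlb : 1 < F.splittingRate) (hMub : F.splittingRate < ⊤)
    (hineq : (d * log F.splittingRate.toReal - F.garsiaEntropy) * log F.splittingRate.toReal ^ 2 <
      1 / 27 * (log F.splittingRate.toReal - F.lyapunovExponent) ^ 3 * F.lam ^ 4) :
    ∃ A ≥ 0, ∃ R > 1, R * (2 * exp 1 * A) < 1 ∧ ∀ᶠ t in atTop, ∃ K : ℕ,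
      (∀ w > 0, ‖convOp (F.stepLaw K).measure * gaussianIncrement (exp (-2 * t)) w‖ ≤
        A * (w / exp (-2 * t))) ∧ t / R ≤ t - K * F.lyapunovExponent := by
  have hM := F.log_splittingRate_pos hMlb hMub
  set L := log F.splittingRate.toReal
  set ε := d * L - F.garsiaEntropy
  have hε : 0 ≤ ε := sub_nonneg.2 (F.garsiaEntropy_le hMlb hMub)
  have hlL : F.lyapunovExponent < L := by
    by_contra! hle
    have hcube : (L - F.lyapunovExponent) ^ 3 ≤ 0 := Odd.pow_nonpos (by decide) (sub_nonpos.2 hle)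
    have hrhs : (L - F.lyapunovExponent) ^ 3 * F.lam ^ 4 ≤ 0 :=
      mul_nonpos_of_nonpos_of_nonneg hcube (pow_pos F.lam_pos 4).le
    linarith [mul_nonneg hε (sq_nonneg L)]
  have hq := sub_pos.2 F.lam_sq_lt_one
  obtain ⟨β, hβ, r, hr, hr1, hεr, hrL⟩ := exists_radius_of_mul_sq_lt F.lam_pos F.lam_sq_lt_one
    F.lyapunovExponent_pos (two_mul_log_inv_mul_sq_le F.lam_pos) hlL hε hineq
  have hcont : ContinuousAt (fun x => 2 * exp 1 * (x / β / (1 - F.lam ^ 2))) ε := by fun_prop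
  obtain ⟨ε', hεε', hε'r⟩ := (hcont.eventually_lt_const hεr).exists_gt
  have hLr : ContinuousAt (fun x => 1 - (1 + β) * F.lyapunovExponent / x) L := by
    fun_prop (disch := exact hM.ne')
  have hLε : ContinuousAt (fun x => d * x - F.garsiaEntropy) L := by fun_prop
  obtain ⟨L', hLL', hrL', hL'ε'⟩ :=
    ((hLr.eventually_const_lt hrL).and (hLε.eventually_lt_const hεε')).exists_gt
  obtain ⟨h', hh', hhF⟩ := exists_between (sub_lt_comm.1 hL'ε')
  have hε' : 0 ≤ ε' := hε.trans hεε'.le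
  refine ⟨ε' / β / (1 - F.lam ^ 2), by positivity, (r ^ 2)⁻¹, (one_lt_inv₀ (by positivity)).2
    (pow_lt_one₀ hr.le hr1 two_ne_zero), (inv_mul_lt_one₀ (by positivity)).2 hε'r, ?_⟩
  simpa only [div_inv_eq_mul, mul_comm _ (r ^ 2)] using
    F.eventually_exists_norm_convOp_stepLaw_mul_gaussianIncrement_le hr
      (F.eventually_exists_hasTranslationBound_stepLaw hMlb hMub hLL' hhF hβ (sub_lt_comm.1 hh')
        hr hrL')

variable {μ : Measure (EuclideanSpace ℝ (Fin d))} [IsProbabilityMeasure μ]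

lemma norm_convOp_mul_gaussianIncrement_pow_succ_le
    (hss : μ = ∑ i, ENNReal.ofReal (F.p i) • Measure.map (F.S i) μ) {A B t w : ℝ} {K m : ℕ}
    (hK : ‖convOp (F.stepLaw K).measure * gaussianIncrement (exp (-2 * t)) w‖ ≤ A)
    (hμ : ‖convOp μ * gaussianIncrement (exp (-2 * (t - K * F.lyapunovExponent)))
      (w / (F.lam ^ K) ^ 2) ^ m‖ ≤ B) :
    ‖convOp μ * gaussianIncrement (exp (-2 * t)) w ^ (m + 1)‖ ≤ A * B := by
  set G := gaussianIncrement (E := EuclideanSpace ℝ (Fin d)) (exp (-2 * t)) w with hG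
  have hsplit : convOp μ * G ^ (m + 1) =
      convOp (F.stepLaw K).measure * G * (convOp (μ.map (F.linearPart K)) * G ^ m) := by
    have hcomm := commute_convOp_gaussianIncrement (μ.map (F.linearPart K)) (exp (-2 * t)) w
    calc convOp μ * G ^ (m + 1)
        = convOp ((F.stepLaw K).measure.conv (μ.map (F.linearPart K))) * G ^ (m + 1) := by
          simp only [← F.eq_measure_stepLaw_conv_map hss K]
      _ = _ := by rw [convOp_conv, pow_succ', mul_assoc, ← mul_assoc (convOp (μ.map _)),
          hcomm.eq, mul_assoc, mul_assoc]
  have hlam := pow_pos F.lam_pos K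
  have hscale : convOp (μ.map (F.linearPart K)) * G ^ m = conjOp (F.linearPart K) (convOp μ *
      gaussianIncrement (exp (-2 * (t - K * F.lyapunovExponent))) (w / (F.lam ^ K) ^ 2) ^ m) := by
    rw [conjOp_mul, conjOp_pow, ← convOp_map, hG, ← F.lam_pow_sq_mul_exp K t,
      linearPart, ← gaussianIncrement_sq_mul, mul_div_cancel₀ _ (by positivity)]
  rw [hsplit, hscale]
  exact norm_mul_le_of_le hK ((norm_conjOp_le _ _).trans hμ)

lemma norm_convOp_mul_gaussianIncrement_pow_le
    (hss : μ = ∑ i, ENNReal.ofReal (F.p i) • Measure.map (F.S i) μ) {A R τ : ℝ}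
    (hR : 1 < R) (hτ : 0 < τ)
    (hstep : ∀ t ≥ τ, ∃ K : ℕ,
      (∀ w > 0, ‖convOp (F.stepLaw K).measure * gaussianIncrement (exp (-2 * t)) w‖ ≤
        A * (w / exp (-2 * t))) ∧ t / R ≤ t - K * F.lyapunovExponent) (m : ℕ) :
    ∀ t ≥ τ * R ^ m, ∀ w > 0,
      ‖convOp μ * gaussianIncrement (exp (-2 * t)) w ^ m‖ ≤ (A * (w / exp (-2 * t))) ^ m := by
  induction m with
  | zero =>
    intro t _ w _
    rw [pow_zero, pow_zero, mul_one]
    exact norm_convOp_le_one μ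
  | succ m ih =>
    intro t ht w hw
    have hR0 : 0 < R := one_pos.trans hR
    obtain ⟨K, hK, hKt⟩ :=
      hstep t ((le_mul_of_one_le_right hτ.le (one_le_pow₀ hR.le)).trans ht)
    have hlam := pow_pos F.lam_pos K
    have ht' : τ * R ^ m ≤ t - K * F.lyapunovExponent := by
      refine le_trans ((le_div_iff₀ hR0).2 ?_) hKt
      rwa [mul_assoc, ← pow_succ]
    have hμ := ih _ ht' (w / (F.lam ^ K) ^ 2) (by positivity)
    rw [div_div, F.lam_pow_sq_mul_exp] at hμ
    rw [pow_succ' (A * _)]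
    exact F.norm_convOp_mul_gaussianIncrement_pow_succ_le hss (hK w hw) hμ

end UIFS

theorem statement1 {d : ℕ} (F : UIFS d)
    (hMlb : 1 < F.splittingRate) (hMub : F.splittingRate < ⊤)
    (hineq : ((d : ℝ) * Real.log F.splittingRate.toReal - F.garsiaEntropy) *
        Real.log F.splittingRate.toReal ^ 2 <
      1 / 27 * (Real.log F.splittingRate.toReal - Real.log F.lam⁻¹) ^ 3 * F.lam ^ 4)
    (μ : Measure (EuclideanSpace ℝ (Fin d))) (hμ : IsProbabilityMeasure μ)
    (hss : μ = ∑ i, ENNReal.ofReal (F.p i) • Measure.map (F.S i) μ) :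
    μ ≪ volume := by
  have := hμ
  obtain ⟨A, hA, R, hR, hAR, hstep⟩ :=
    F.exists_eventually_norm_convOp_stepLaw_mul_gaussianIncrement_le hMlb hMub hineq
  obtain ⟨τ, hτ⟩ := eventually_atTop.1 (hstep.and (eventually_gt_atTop 0))
  have hτ0 : 0 < τ := (hτ τ le_rfl).2
  exact absolutelyContinuous_of_forall_norm_convOp_mul_gaussianIncrement_pow_le μ hA hR hAR hτ0
    (F.norm_convOp_mul_gaussianIncrement_pow_le hss hR hτ0 fun t ht => (hτ t ht).1)
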